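/- For every integer ℓ ≥ 3 and every finite graph G with a weighting w such that G does not contain the ℓ-wheel W_ℓ as an induced minor, there exists a w-balanced separator of G that either is contained in the closed neighbourhood of a set of at most ℓ vertices, or has size at most (ℓ-1)². -/

import Mathlib

open SimpleGraph

variable {V : Type}

/-- `u` and `v` are connected by a walk in `G` avoiding `S`
(i.e., they lie in the same component of `G - S`). -/
def ReachOutside (G : SimpleGraph V) (S : Set V) (u v : V) : Prop :=
  ∃ p : G.Walk u v, ∀ x ∈ p.support, x ∉ S

/-- Total weight of a vertex set. -/
noncomputable def setWeight [Finite V] (w : V → ℝ) (A : Set V) : ℝ :=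
  ∑ v ∈ (Set.toFinite A).toFinset, w v

/-- `S` is a `w`-balanced separator of `G`: every component of `G - S`
has weight at most half the total weight. -/
def IsBalancedSep [Finite V] (G : SimpleGraph V) (w : V → ℝ) (S : Set V) : Prop :=
  ∀ v, v ∉ S → setWeight w {u | ReachOutside G S u v} ≤ setWeight w (Set.univ : Set V) / 2

/-- Closed neighbourhood `N[A]` of a vertex set. -/
def closedNbhd (G : SimpleGraph V) (A : Set V) : Set V :=
  A ∪ {x | ∃ a ∈ A, G.Adj a x}

/-- `S` separates `A` from `B` in `G`: every walk from `A` to `B` meets `S`. -/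
def Separates (G : SimpleGraph V) (S A B : Set V) : Prop :=
  ∀ a ∈ A, ∀ b ∈ B, ∀ p : G.Walk a b, ∃ x ∈ p.support, x ∈ S

/-- `C` is (the vertex set of) an induced cycle of `G`: the induced subgraph is
connected and every vertex of `C` has exactly two neighbours in `C`. -/
def IsInducedCycle (G : SimpleGraph V) (C : Set V) : Prop :=
  (G.induce C).Connected ∧ ∀ x ∈ C, (G.neighborSet x ∩ C).ncard = 2

/-- `H` is an induced minor of `G`. -/
def IsInducedMinor {W : Type} (H : SimpleGraph W) (G : SimpleGraph V) : Prop :=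
  ∃ X : W → Set V,
    (∀ a, (G.induce (X a)).Connected) ∧
    (Pairwise fun a b => Disjoint (X a) (X b)) ∧
    ∀ a b, a ≠ b → ((∃ u ∈ X a, ∃ v ∈ X b, G.Adj u v) ↔ H.Adj a b)

/-- `H` is a minor of `G`. -/
def IsMinor {W : Type} (H : SimpleGraph W) (G : SimpleGraph V) : Prop :=
  ∃ X : W → Set V,
    (∀ a, (G.induce (X a)).Connected) ∧
    (Pairwise fun a b => Disjoint (X a) (X b)) ∧
    ∀ a b, H.Adj a b → ∃ u ∈ X a, ∃ v ∈ X b, G.Adj u v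

/-- The `ℓ`-wheel: a cycle of length `ℓ` plus a universal vertex (`none`). -/
def wheel (ℓ : ℕ) : SimpleGraph (Option (ZMod ℓ)) :=
  SimpleGraph.fromRel fun a b =>
    a = none ∨ b = none ∨ ∃ i : ZMod ℓ, a = some i ∧ b = some (i + 1)

/-- The `ℓ`-fan: a path on `ℓ` vertices plus a universal vertex (`none`). -/
def fan (ℓ : ℕ) : SimpleGraph (Option (Fin ℓ)) :=
  SimpleGraph.fromRel fun a b =>
    a = none ∨ b = none ∨ ∃ i j : Fin ℓ, a = some i ∧ b = some j ∧ (j : ℕ) = (i : ℕ) + 1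

/-!
Let `q = ℓ - 1`. In a graph without the induced minor `W_ℓ`, a connected set that avoids an induced
cycle attaches to at most `q` of its vertices: otherwise it is the hub of a wheel whose rim consists
of `ℓ` arcs of the cycle. Take a shortest induced path whose closed neighbourhood is a balanced
separator. If it has more than `ℓ` vertices, then a heavy component left by the closed neighbourhood
of its interior joins its ends to an induced cycle, and the vertex set of this cycle is a balanced
separator, since a heavy component avoiding it would attach to the path in at most `q` vertices.

Suppose now that some induced cycle is a balanced separator but no set of `q ^ 2` vertices is. If a
component `K` attaches to such a cycle in two non-adjacent vertices, then removing at most `q`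
vertices for each of the at most `q` gaps between consecutive attachments leaves a heavy component
that meets the cycle inside a single gap, and rerouting the cycle through `K` along this gap gives a
second balanced cycle. Consider the shortest arc that is such a heavy gap or that contains all
vertices of the cycle in some heavy component left by removing its two ends. The latter case always
occurs for this length, and a detour of the cycle around as long a part of this arc as possible
contradicts either the choice of the arc or that of the detour.
-/

/-- The vertices with a neighbour in `A`, so that `closedNbhd G A = A ∪ openNbhd G A`. Unlike in the
usual convention, vertices of `A` are not removed. -/
def openNbhd (G : SimpleGraph V) (A : Set V) : Set V :=
  {x | ∃ a ∈ A, G.Adj a x}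

/-- `K` is the vertex set of a connected component of `G - S`. -/
structure IsComponent (G : SimpleGraph V) (S K : Set V) : Prop where
  connected : (G.induce K).Connected
  disjoint : Disjoint K S
  openNbhd_subset : openNbhd G K ⊆ K ∪ S

/-- The component of `G - S` that contains `v`; it is empty when `v ∈ S`. -/
def componentOf (G : SimpleGraph V) (S : Set V) (v : V) : Set V :=
  {u | ReachOutside G S u v}

section Components

variable {G : SimpleGraph V}

lemma openNbhd_mono {A B : Set V} (h : A ⊆ B) : openNbhd G A ⊆ openNbhd G B :=
  fun _ ⟨a, ha, hax⟩ => ⟨a, h ha, hax⟩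

lemma closedNbhd_mono {A B : Set V} (h : A ⊆ B) : closedNbhd G A ⊆ closedNbhd G B :=
  Set.union_subset_union h (openNbhd_mono h)

lemma subset_of_openNbhd_subset {S B Q : Set V} (hB : (G.induce B).Preconnected)
    (hBS : Disjoint B S) (hQ : openNbhd G Q ⊆ Q ∪ S) (hBQ : (B ∩ Q).Nonempty) : B ⊆ Q := by
  obtain ⟨x, hxB, hxQ⟩ := hBQ
  intro y hyB
  by_contra hyQ
  obtain ⟨p⟩ := hB ⟨x, hxB⟩ ⟨y, hyB⟩
  obtain ⟨d, -, hd, hd'⟩ := p.exists_boundary_dart (Subtype.val ⁻¹' Q) hxQ hyQ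
  exact (hQ ⟨d.fst, hd, d.adj⟩).elim hd' (Set.disjoint_left.1 hBS d.snd.2)

lemma preconnected_insert {B : Set V} (hB : (G.induce B).Preconnected) {v : V}
    (hv : v ∈ B ∪ openNbhd G B) : (G.induce (insert v B)).Preconnected := by
  rcases hv with hv | ⟨b, hb, hbv⟩
  · rwa [Set.insert_eq_of_mem hv]
  · have := induce_union_connected (induce_pair_connected_of_adj hbv).preconnected hB
      ⟨b, Set.mem_insert _ _, hb⟩
    rw [Set.insert_union, Set.singleton_union, Set.insert_comm,
      Set.insert_eq_of_mem hb] at this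
    exact this.preconnected

lemma preconnected_image_of_ordConnected {f : ℕ → V} (hf : ∀ i, G.Adj (f i) (f (i + 1)))
    {I : Set ℕ} (hI : I.OrdConnected) : (G.induce (f '' I)).Preconnected := by
  have reach {i : ℕ} (hi : i ∈ I) {j : ℕ} (hij : i ≤ j) (hj : j ∈ I) :
      (G.induce (f '' I)).Reachable ⟨f i, i, hi, rfl⟩ ⟨f j, j, hj, rfl⟩ := by
    induction j, hij using Nat.le_induction with
    | base => exact .refl _
    | succ j hij ih =>
      exact (ih (hI.out hi hj ⟨hij, j.le_succ⟩)).trans (Adj.reachable (hf j))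
  rintro ⟨_, i, hi, rfl⟩ ⟨_, j, hj, rfl⟩
  rcases le_total i j with hij | hij
  exacts [reach hi hij hj, (reach hj hij hi).symm]

lemma isComponent_componentOf {S : Set V} {v : V} (hv : v ∉ S) :
    IsComponent G S (componentOf G S v) where
  connected := by
    classical
    refine induce_connected_of_patches v ⟨.nil, by simpa using hv⟩ fun {u} ⟨p, hp⟩ => ?_
    refine ⟨{x | x ∈ p.support}, fun x hx => ⟨p.dropUntil x hx, fun y hy => ?_⟩,
      p.end_mem_support, p.start_mem_support, p.connected_induce_support.preconnected _ _⟩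
    exact hp y (p.support_dropUntil_subset_support hx hy)
  disjoint := Set.disjoint_left.2 fun _ ⟨p, hp⟩ => hp _ p.start_mem_support
  openNbhd_subset := by
    rintro x ⟨u, ⟨p, hp⟩, hux⟩
    refine or_iff_not_imp_right.2 fun hx => ⟨.cons hux.symm p, ?_⟩
    simpa using ⟨hx, hp⟩

lemma mem_componentOf {S : Set V} {v : V} (hv : v ∉ S) : v ∈ componentOf G S v :=
  ⟨.nil, by simpa using hv⟩

lemma IsComponent.subset {S K B : Set V} (hK : IsComponent G S K) (hB : (G.induce B).Preconnected)
    (hBS : Disjoint B S) (hBK : (B ∩ K).Nonempty) : B ⊆ K :=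
  subset_of_openNbhd_subset hB hBS hK.openNbhd_subset hBK

lemma IsComponent.openNbhd_subset_union_inter {S K : Set V} (hK : IsComponent G S K) :
    openNbhd G K ⊆ K ∪ (S ∩ openNbhd G K) :=
  fun _ hx => (hK.openNbhd_subset hx).imp_right fun hxS => ⟨hxS, hx⟩

end Components

/-- `B` carries more than half of the total weight. -/
def IsHeavy [Finite V] (w : V → ℝ) (B : Set V) : Prop :=
  setWeight w Set.univ / 2 < setWeight w B

/-- A hub of `S` is a component of `G - S` carrying more than half of the total weight: it witnesses
that `S` is not balanced. -/
structure IsHub [Finite V] (G : SimpleGraph V) (w : V → ℝ) (S B : Set V) : Prop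
    extends IsComponent G S B where
  heavy : IsHeavy w B

section Weights

variable [Finite V] {G : SimpleGraph V} {w : V → ℝ} {A B S : Set V}

lemma setWeight_mono (hw : ∀ v, 0 ≤ w v) (h : A ⊆ B) : setWeight w A ≤ setWeight w B :=
  Finset.sum_le_sum_of_subset_of_nonneg (Set.Finite.toFinset_subset_toFinset.2 h)
    fun _ _ _ => hw _

lemma IsHeavy.mono (hw : ∀ v, 0 ≤ w v) (hA : IsHeavy w A) (h : A ⊆ B) : IsHeavy w B :=
  hA.trans_le (setWeight_mono hw h)

lemma IsHeavy.inter_nonempty (hw : ∀ v, 0 ≤ w v) (hA : IsHeavy w A) (hB : IsHeavy w B) :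
    (A ∩ B).Nonempty := by
  classical
  refine Set.not_disjoint_iff_nonempty_inter.1 fun h => ?_
  have hdisj := Set.Finite.disjoint_toFinset (hs := Set.toFinite A) (ht := Set.toFinite B) |>.2 h
  have hle : setWeight w A + setWeight w B ≤ setWeight w Set.univ := by
    rw [setWeight, setWeight, ← Finset.sum_union hdisj]
    exact Finset.sum_le_sum_of_subset_of_nonneg (fun x => by simp) fun _ _ _ => hw _
  rw [IsHeavy] at hA hB
  linarith

lemma IsHeavy.nonempty (hw : ∀ v, 0 ≤ w v) (hA : IsHeavy w A) : A.Nonempty := by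
  simpa using hA.inter_nonempty hw hA

lemma exists_isHub (h : ¬ IsBalancedSep G w S) : ∃ B, IsHub G w S B := by
  simp only [IsBalancedSep, not_forall, not_le] at h
  obtain ⟨v, hv, hlt⟩ := h
  exact ⟨componentOf G S v, isComponent_componentOf hv, hlt⟩

lemma IsBalancedSep.inter_nonempty (hw : ∀ v, 0 ≤ w v) (hS : IsBalancedSep G w S)
    (hB : (G.induce B).Preconnected) (hBw : IsHeavy w B) : (B ∩ S).Nonempty := by
  refine Set.not_disjoint_iff_nonempty_inter.1 fun hBS => ?_
  obtain ⟨x, hx⟩ := hBw.nonempty hw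
  have hxS := Set.disjoint_left.1 hBS hx
  have hsub := (isComponent_componentOf hxS).subset hB hBS ⟨x, hx, mem_componentOf hxS⟩
  exact (hBw.mono hw hsub).not_ge (hS x hxS)

lemma IsBalancedSep.mono (hw : ∀ v, 0 ≤ w v) (hS : IsBalancedSep G w S) (h : S ⊆ A) :
    IsBalancedSep G w A := by
  by_contra hA
  obtain ⟨B, hB⟩ := exists_isHub hA
  obtain ⟨x, hxB, hxS⟩ := hS.inter_nonempty hw hB.connected.preconnected hB.heavy
  exact Set.disjoint_left.1 hB.disjoint hxB (h hxS)

lemma IsHub.subset (hw : ∀ v, 0 ≤ w v) (hB : IsHub G w S B) (hA : (G.induce A).Preconnected)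
    (hAS : Disjoint A S) (hAw : IsHeavy w A) : A ⊆ B :=
  hB.toIsComponent.subset hA hAS (hAw.inter_nonempty hw hB.heavy)

end Weights

/-- `p 0, …, p m` are the successive vertices of an induced path of `G`. -/
structure TracesPath (G : SimpleGraph V) (p : ℕ → V) (m : ℕ) : Prop where
  ne : ∀ {i j}, i < j → j ≤ m → p i ≠ p j
  adj_iff : ∀ {i j}, i < j → j ≤ m → (G.Adj (p i) (p j) ↔ j = i + 1)

/-- `f` runs `n`-periodically around an induced cycle of length `n`. Indexing by `ℕ` rather than
`ZMod n` lets us cut the cycle into intervals; `f i` and `f j` are compared when `i < j < i + n`. -/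
structure TracesCycle (G : SimpleGraph V) (f : ℕ → V) (n : ℕ) : Prop where
  three_le : 3 ≤ n
  periodic : Function.Periodic f n
  ne : ∀ {i j}, i < j → j < i + n → f i ≠ f j
  adj_iff : ∀ {i j}, i < j → j < i + n → (G.Adj (f i) (f j) ↔ j = i + 1 ∨ j + 1 = i + n)

namespace TracesCycle

variable {G : SimpleGraph V} {f : ℕ → V} {n : ℕ}

lemma adj_succ (h : TracesCycle G f n) (i : ℕ) : G.Adj (f i) (f (i + 1)) :=
  (h.adj_iff i.lt_succ_self (by have := h.three_le; omega)).2 (.inl rfl)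

lemma not_adj (h : TracesCycle G f n) {i j : ℕ} (hij : i + 2 ≤ j) (hji : j + 2 ≤ i + n) :
    ¬ G.Adj (f i) (f j) := by
  rw [h.adj_iff (by omega) (by omega)]
  omega

lemma shift (h : TracesCycle G f n) (k : ℕ) : TracesCycle G (fun i => f (i + k)) n where
  three_le := h.three_le
  periodic i := by simp only [add_right_comm i n k, h.periodic (i + k)]
  ne hij hji := h.ne (by omega) (by omega)
  adj_iff hij hji := (h.adj_iff (by omega) (by omega)).trans (by omega)

lemma exists_index_ge (h : TracesCycle G f n) {x : V} (hx : x ∈ Set.range f) (k : ℕ) :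
    ∃ i, k ≤ i ∧ i < k + n ∧ f i = x := by
  obtain ⟨j, rfl⟩ := hx
  have hn := h.three_le
  have hk : k ≤ n * k := Nat.le_mul_of_pos_left k (by omega)
  refine ⟨k + (j + (n * k - k)) % n, Nat.le_add_right _ _,
    Nat.add_lt_add_left (Nat.mod_lt _ (by omega)) k, ?_⟩
  rw [← h.periodic.map_mod_nat, Nat.add_mod_mod, show k + (j + (n * k - k)) = j + n * k by omega,
    Nat.add_mul_mod_self_left, h.periodic.map_mod_nat]

lemma exists_index (h : TracesCycle G f n) {x : V} (hx : x ∈ Set.range f) :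
    ∃ i < n, f i = x := by
  obtain ⟨i, -, hi, hix⟩ := h.exists_index_ge hx 0
  exact ⟨i, by omega, hix⟩

lemma index_eq (h : TracesCycle G f n) {i j : ℕ} (hi : i < n) (hj : j < n) (hij : f i = f j) :
    i = j := by
  by_contra hne
  rcases Nat.lt_or_gt_of_ne hne with hlt | hlt
  exacts [h.ne hlt (by omega) hij, h.ne hlt (by omega) hij.symm]

lemma range_shift (h : TracesCycle G f n) (k : ℕ) :
    Set.range (fun i => f (i + k)) = Set.range f := by
  refine Set.Subset.antisymm (Set.range_comp_subset_range (· + k) f) fun x hx => ?_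
  obtain ⟨i, hki, -, rfl⟩ := h.exists_index_ge hx k
  exact ⟨i - k, by simp only [Nat.sub_add_cancel hki]⟩

lemma tracesPath (h : TracesCycle G f n) {m : ℕ} (hm : m + 2 ≤ n) : TracesPath G f m where
  ne hij hj := h.ne hij (by omega)
  adj_iff hij hj := (h.adj_iff hij (by omega)).trans (by omega)

lemma of_window {h : ℕ → V} (hn : 3 ≤ n) (hne : ∀ {i j}, i < j → j < n → h i ≠ h j)
    (hadj : ∀ {i j}, i < j → j < n → (G.Adj (h i) (h j) ↔ j = i + 1 ∨ j + 1 = i + n)) :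
    TracesCycle G (fun i => h (i % n)) n := by
  have hmod (i : ℕ) : i % n < n := Nat.mod_lt _ (by omega)
  have reduce {i j : ℕ} (hij : i < j) (hj : j < i + n) :
      (i % n < j % n ∧ j % n = i % n + (j - i)) ∨
        (j % n < i % n ∧ j % n + n = i % n + (j - i)) := by
    have hjm : j % n = (i % n + (j - i)) % n := by
      rw [Nat.mod_add_mod, Nat.add_sub_cancel' hij.le]
    rcases Nat.lt_or_ge (i % n + (j - i)) n with hlt | hge
    · rw [Nat.mod_eq_of_lt hlt] at hjm; omega
    · have := hmod i
      rw [Nat.mod_eq_sub_mod hge,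
        Nat.mod_eq_of_lt (show i % n + (j - i) - n < n by omega)] at hjm
      omega
  refine ⟨hn, fun i => by simp, fun {i j} hij hj => ?_, fun {i j} hij hj => ?_⟩
  · rcases reduce hij hj with ⟨hlt, -⟩ | ⟨hlt, -⟩
    exacts [hne hlt (hmod j), (hne hlt (hmod i)).symm]
  · rcases reduce hij hj with ⟨hlt, heq⟩ | ⟨hlt, heq⟩
    · rw [hadj hlt (hmod j)]; omega
    · rw [G.adj_comm, hadj hlt (hmod i)]; omega

end TracesCycle

section ShortestPaths

variable {G : SimpleGraph V} {K : Set V}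

lemma tracesPath_of_length_eq_dist {u v : V} (p : G.Walk u v) (hp : p.length = G.dist u v) :
    TracesPath G p.getVert p.length := by
  have hdist {i : ℕ} (hi : i ≤ p.length) : G.dist u (p.getVert i) = i := by
    rw [← length_eq_dist_of_subwalk hp (p.isSubwalk_take i), p.take_length, min_eq_left hi]
  refine ⟨fun {i j} hij hj heq => ?_, fun {i j} hij hj => ⟨fun hadj => ?_, ?_⟩⟩
  · have := hdist hj
    rw [← heq, hdist (by omega)] at this
    omega
  · have := hadj.diff_dist_adj (u := u)
    rw [hdist hj, hdist (by omega)] at this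
    omega
  · rintro rfl
    exact p.adj_getVert_succ (by omega)

lemma exists_tracesPath_through (hK : (G.induce K).Preconnected) {d d' : V}
    (hd : d ∈ openNbhd G K) (hd' : d' ∈ openNbhd G K) (hne : d ≠ d') (hadj : ¬ G.Adj d d') :
    ∃ L r, 2 ≤ L ∧ TracesPath G r L ∧ r 0 = d ∧ r L = d' ∧ ∀ i, 0 < i → i < L → r i ∈ K := by
  have hA : (G.induce (insert d (insert d' K))).Preconnected :=
    preconnected_insert (preconnected_insert hK (.inr hd')) <|
      .inr (openNbhd_mono (Set.subset_insert _ _) hd)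
  set A := insert d (insert d' K)
  obtain ⟨p, hp⟩ := (hA ⟨d, by simp [A]⟩ ⟨d', by simp [A]⟩).exists_walk_length_eq_dist
  have path := tracesPath_of_length_eq_dist p hp
  have r0 : (p.getVert 0 : V) = d := by simp
  have rL : (p.getVert p.length : V) = d' := by simp
  refine ⟨p.length, fun i => p.getVert i, ?_, ⟨fun hij hj => ?_, path.adj_iff⟩, r0, rL,
    fun i hi hiL => ?_⟩
  · rw [hp]
    exact (hA _ _).one_lt_dist_of_ne_of_not_adj (by simpa using hne) (by simpa using hadj)
  · exact Subtype.coe_injective.ne (path.ne hij hj)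
  · have h0 := Subtype.coe_injective.ne (path.ne hi hiL.le)
    have hL := Subtype.coe_injective.ne (path.ne hiL le_rfl)
    rw [r0] at h0
    rw [rL] at hL
    exact ((p.getVert i).2.resolve_left h0.symm).resolve_left hL

lemma TracesPath.exists_tracesCycle {p : ℕ → V} {m : ℕ} (hp : TracesPath G p m) (hm : 2 ≤ m)
    (hK : (G.induce K).Preconnected) (hpK : ∀ i ≤ m, p i ∉ K) (h0 : p 0 ∈ openNbhd G K)
    (hpm : p m ∈ openNbhd G K) (hmid : ∀ i, 0 < i → i < m → p i ∉ openNbhd G K) :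
    ∃ h n, TracesCycle G h n ∧ m + 2 ≤ n ∧ (∀ i ≤ m, h i = p i) ∧
      ∀ i, m < i → i < n → h i ∈ K := by
  obtain ⟨L, r, hL, hr, r0, rL, hrK⟩ := exists_tracesPath_through hK hpm h0
    (hp.ne (by omega) le_rfl).symm (by rw [G.adj_comm, hp.adj_iff (by omega) le_rfl]; omega)
  let g : ℕ → V := fun i => if i ≤ m then p i else r (i - m)
  have gp {i : ℕ} (hi : i ≤ m) : g i = p i := if_pos hi
  have gr {i : ℕ} (hi : m ≤ i) : g i = r (i - m) := by
    rcases hi.eq_or_lt with rfl | hi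
    · rw [gp le_rfl, Nat.sub_self, r0]
    · exact if_neg hi.not_ge
  have gK {i : ℕ} (hi : m < i) (hi' : i < m + L) : g i ∈ K :=
    gr hi.le ▸ hrK _ (by omega) (by omega)
  have hne {i j : ℕ} (hij : i < j) (hj : j < m + L) : g i ≠ g j := by
    rcases le_or_gt j m with hjm | hmj
    · rw [gp (by omega), gp hjm]; exact hp.ne hij hjm
    rcases le_or_gt m i with hmi | him
    · rw [gr hmi, gr hmj.le]; exact hr.ne (by omega) (by omega)
    · exact fun heq => hpK i him.le (gp him.le ▸ heq ▸ gK hmj hj)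
  have hadj {i j : ℕ} (hij : i < j) (hj : j < m + L) :
      G.Adj (g i) (g j) ↔ j = i + 1 ∨ j + 1 = i + (m + L) := by
    rcases le_or_gt j m with hjm | hmj
    · rw [gp (by omega), gp hjm, hp.adj_iff hij hjm]; omega
    rcases le_or_gt m i with hmi | him
    · rw [gr hmi, gr hmj.le, hr.adj_iff (by omega) (by omega)]; omega
    rcases Nat.eq_zero_or_pos i with rfl | hi
    · rw [gp him.le, ← rL, G.adj_comm, gr hmj.le, hr.adj_iff (by omega) le_rfl]; omega
    · refine iff_of_false (fun h => hmid i hi him ⟨_, gK hmj hj, ?_⟩) (by omega)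
      exact gp him.le ▸ h.symm
  refine ⟨_, m + L, .of_window (by omega) hne hadj, by omega, fun i hi => ?_, fun i hi hi' => ?_⟩
  · simp only [Nat.mod_eq_of_lt (show i < m + L by omega), gp hi]
  · simpa only [Nat.mod_eq_of_lt hi'] using gK hi hi'

end ShortestPaths

/-- Every connected set disjoint from an induced cycle is attached to at most `q` vertices of it. -/
def FewAttachments (G : SimpleGraph V) (q : ℕ) : Prop :=
  ∀ ⦃f : ℕ → V⦄ ⦃n : ℕ⦄, TracesCycle G f n → ∀ ⦃B : Set V⦄, (G.induce B).Connected →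
    Disjoint B (Set.range f) → (Set.range f ∩ openNbhd G B).ncard ≤ q

open Classical in
/-- The number of indices `j ≤ i` with `f j ∈ T`. When `f` runs around a cycle and `T` has `ℓ`
vertices, its residue modulo `ℓ` tells on which of the `ℓ` arcs cut out by `T` the vertex `f i`
lies. -/
noncomputable def arcIndex (f : ℕ → V) (T : Set V) (i : ℕ) : ℕ :=
  Nat.count (f · ∈ T) (i + 1)

section Wheel

variable {G : SimpleGraph V} {f : ℕ → V} {n ℓ : ℕ} {T : Set V}

lemma arcIndex_monotone (f : ℕ → V) (T : Set V) : Monotone (arcIndex f T) := by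
  classical exact fun _ _ hij => Nat.count_monotone _ (Nat.succ_le_succ hij)

lemma arcIndex_succ_of_mem {i : ℕ} (h : f (i + 1) ∈ T) :
    arcIndex f T (i + 1) = arcIndex f T i + 1 := by
  rw [arcIndex, Nat.count_succ, if_pos h, arcIndex]

lemma arcIndex_succ_of_notMem {i : ℕ} (h : f (i + 1) ∉ T) :
    arcIndex f T (i + 1) = arcIndex f T i := by
  rw [arcIndex, Nat.count_succ, if_neg h, arcIndex, add_zero]

lemma arcIndex_zero_of_mem (h : f 0 ∈ T) : arcIndex f T 0 = 1 := by
  rw [arcIndex, Nat.count_succ, if_pos h, Nat.count_zero]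

lemma arcIndex_zero_of_notMem (h : f 0 ∉ T) : arcIndex f T 0 = 0 := by
  rw [arcIndex, Nat.count_succ, if_neg h, Nat.count_zero]

open Classical in
lemma TracesCycle.count_period (h : TracesCycle G f n) (hT : T ⊆ Set.range f) :
    Nat.count (f · ∈ T) n = T.ncard := by
  have himage : f '' ↑((Finset.range n).filter (f · ∈ T)) = T := by
    ext x
    simp only [Finset.coe_filter, Finset.mem_range, Set.mem_image, Set.mem_ofPred_eq]
    refine ⟨fun ⟨i, hi, hix⟩ => hix ▸ hi.2, fun hx => ?_⟩
    obtain ⟨i, hi, rfl⟩ := h.exists_index (hT hx)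
    exact ⟨i, ⟨hi, hx⟩, rfl⟩
  rw [Nat.count_eq_card_filter_range, ← Set.ncard_coe_finset, ← Set.InjOn.ncard_image, himage]
  intro i hi j hj hij
  simp only [Finset.coe_filter, Finset.mem_range, Set.mem_ofPred_eq] at hi hj
  exact h.index_eq hi.1 hj.1 hij

lemma TracesCycle.arcIndex_add (h : TracesCycle G f n) (hT : T ⊆ Set.range f) (i : ℕ) :
    arcIndex f T (i + n) = arcIndex f T i + T.ncard := by
  classical
  rw [← (h.shift (i + 1)).count_period (h.range_shift (i + 1) ▸ hT), arcIndex, arcIndex,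
    add_right_comm, Nat.count_add]
  simp only [add_comm]

lemma TracesCycle.arcIndex_add_mul (h : TracesCycle G f n) (hT : T ⊆ Set.range f) (i t : ℕ) :
    arcIndex f T (i + n * t) = arcIndex f T i + T.ncard * t := by
  induction t with
  | zero => simp
  | succ t ih => rw [mul_add_one, ← add_assoc, h.arcIndex_add hT, ih, mul_add_one, add_assoc]

lemma TracesCycle.arcIndex_le (h : TracesCycle G f n) (hT : T ⊆ Set.range f) {i : ℕ}
    (hi : i < n) : arcIndex f T i ≤ T.ncard := by
  classical
  rw [← h.count_period hT]
  exact Nat.count_monotone _ hi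

lemma TracesCycle.exists_arcIndex_eq (h : TracesCycle G f n) (hT : T ⊆ Set.range f)
    (hT₀ : T.ncard ≠ 0) {k : ℕ} (hk : k ≠ 0) : ∃ i, f i ∈ T ∧ arcIndex f T i = k := by
  classical
  have hex : ∃ i, k ≤ arcIndex f T i := by
    refine ⟨0 + n * k, (h.arcIndex_add_mul hT 0 k).ge.trans' ?_⟩
    exact (Nat.le_mul_of_pos_left k (Nat.pos_of_ne_zero hT₀)).trans (Nat.le_add_left _ _)
  obtain ⟨i, hi, hmin⟩ : ∃ i, k ≤ arcIndex f T i ∧ ∀ j < i, arcIndex f T j < k :=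
    ⟨Nat.find hex, Nat.find_spec hex, fun j hj => not_le.1 (Nat.find_min hex hj)⟩
  rcases i with - | i
  · have hf : f 0 ∈ T := by
      by_contra hf
      rw [arcIndex_zero_of_notMem hf] at hi
      omega
    rw [arcIndex_zero_of_mem hf] at hi
    exact ⟨0, hf, by rw [arcIndex_zero_of_mem hf]; omega⟩
  · have hlt := hmin i i.lt_succ_self
    have hf : f (i + 1) ∈ T := by
      by_contra hf
      rw [arcIndex_succ_of_notMem hf] at hi
      omega
    rw [arcIndex_succ_of_mem hf] at hi
    exact ⟨i + 1, hf, by rw [arcIndex_succ_of_mem hf]; omega⟩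

lemma TracesCycle.cast_arcIndex_mod (h : TracesCycle G f n) (hT : T ⊆ Set.range f) (i : ℕ) :
    (arcIndex f T (i % n) : ZMod T.ncard) = arcIndex f T i := by
  conv_rhs => rw [← Nat.mod_add_div i n, h.arcIndex_add_mul hT]
  simp

/-- The arc with number `z` among those into which `T` cuts the cycle traced by `f`. The shift by
`T.ncard` keeps clear of the indices before the first element of `T`. -/
def cycleArc (f : ℕ → V) (T : Set V) (z : ZMod T.ncard) : Set V :=
  f '' {i | arcIndex f T i = z.val + T.ncard}

lemma TracesCycle.mem_cycleArc_iff (h : TracesCycle G f n) (hT : T ⊆ Set.range f)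
    (hT₀ : T.ncard ≠ 0) {i : ℕ} {z : ZMod T.ncard} :
    f i ∈ cycleArc f T z ↔ (arcIndex f T i : ZMod T.ncard) = z := by
  have : NeZero T.ncard := ⟨hT₀⟩
  have hn := h.three_le
  have hmod (i : ℕ) : i % n < n := Nat.mod_lt _ (by omega)
  constructor
  · rintro ⟨j, hj, hji⟩
    have hij : j % n = i % n := h.index_eq (hmod j) (hmod i) <| by
      rwa [h.periodic.map_mod_nat, h.periodic.map_mod_nat]
    rw [← h.cast_arcIndex_mod hT, ← hij, h.cast_arcIndex_mod hT, hj]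
    simp
  · intro hz
    have hle : arcIndex f T (i % n) ≤ z.val + T.ncard :=
      (h.arcIndex_le hT (hmod i)).trans (Nat.le_add_left _ _)
    obtain ⟨t, ht⟩ : T.ncard ∣ z.val + T.ncard - arcIndex f T (i % n) := by
      rw [← Nat.modEq_iff_dvd' hle, ← ZMod.natCast_eq_natCast_iff, h.cast_arcIndex_mod hT, hz]
      simp
    refine ⟨i % n + n * t, ?_, ?_⟩
    · rw [Set.mem_ofPred_eq, h.arcIndex_add_mul hT, ← ht]
      omega
    · rw [← h.periodic.map_mod_nat, Nat.add_mul_mod_self_left, Nat.mod_mod,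
        h.periodic.map_mod_nat]

lemma TracesCycle.preconnected_cycleArc (h : TracesCycle G f n) (z : ZMod T.ncard) :
    (G.induce (cycleArc f T z)).Preconnected := by
  refine preconnected_image_of_ordConnected h.adj_succ ⟨fun i hi j hj k hk => ?_⟩
  have h₁ := arcIndex_monotone f T hk.1
  have h₂ := arcIndex_monotone f T hk.2
  rw [Set.mem_ofPred_eq] at *
  omega

lemma TracesCycle.exists_mem_inter_cycleArc (h : TracesCycle G f n) (hT : T ⊆ Set.range f)
    (hT₀ : T.ncard ≠ 0) (z : ZMod T.ncard) : (T ∩ cycleArc f T z).Nonempty := by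
  obtain ⟨i, hi, hiz⟩ := h.exists_arcIndex_eq hT hT₀ (k := z.val + T.ncard) (by omega)
  exact ⟨f i, hi, i, hiz, rfl⟩

lemma TracesCycle.eq_succ_of_adj (h : TracesCycle G f n) {u v : V} (hu : u ∈ Set.range f)
    (hv : v ∈ Set.range f) (huv : G.Adj u v) :
    ∃ i, (f i = u ∧ f (i + 1) = v) ∨ (f i = v ∧ f (i + 1) = u) := by
  obtain ⟨i, rfl⟩ := hu
  obtain ⟨j, hij, hj, rfl⟩ := h.exists_index_ge hv i
  rcases hij.eq_or_lt with rfl | hij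
  · exact absurd huv G.irrefl
  · rcases (h.adj_iff hij hj).1 huv with rfl | hji
    exacts [⟨i, .inl ⟨rfl, rfl⟩⟩, ⟨j, .inr ⟨rfl, by rw [hji, h.periodic]⟩⟩]

lemma TracesCycle.exists_adj_cycleArc_iff (h : TracesCycle G f n) (hT : T ⊆ Set.range f)
    (hT₀ : T.ncard ≠ 0) {a b : ZMod T.ncard} (hab : a ≠ b) :
    (∃ u ∈ cycleArc f T a, ∃ v ∈ cycleArc f T b, G.Adj u v) ↔ b = a + 1 ∨ a = b + 1 := by
  have step {a b : ZMod T.ncard} (hab : a ≠ b) {i : ℕ} (ha : f i ∈ cycleArc f T a)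
      (hb : f (i + 1) ∈ cycleArc f T b) : b = a + 1 := by
    rw [h.mem_cycleArc_iff hT hT₀] at ha hb
    by_cases hi : f (i + 1) ∈ T
    · rw [← ha, ← hb, arcIndex_succ_of_mem hi, Nat.cast_succ]
    · rw [arcIndex_succ_of_notMem hi] at hb
      exact absurd (ha.symm.trans hb) hab
  have cross (a : ZMod T.ncard) : ∃ u ∈ cycleArc f T a, ∃ v ∈ cycleArc f T (a + 1), G.Adj u v := by
    obtain ⟨i, hi, hia⟩ := h.exists_arcIndex_eq hT hT₀ (k := a.val + T.ncard + 1) (by omega)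
    rcases i with - | i
    · rw [arcIndex_zero_of_mem hi] at hia
      omega
    · rw [arcIndex_succ_of_mem hi] at hia
      have : NeZero T.ncard := ⟨hT₀⟩
      refine ⟨f i, ?_, f (i + 1), ?_, h.adj_succ i⟩ <;> rw [h.mem_cycleArc_iff hT hT₀]
      · simp [Nat.succ_injective hia]
      · simp [arcIndex_succ_of_mem hi, Nat.succ_injective hia]
  constructor
  · rintro ⟨u, hu, v, hv, huv⟩
    obtain ⟨i, ⟨rfl, rfl⟩ | ⟨rfl, rfl⟩⟩ := h.eq_succ_of_adj (Set.image_subset_range _ _ hu)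
      (Set.image_subset_range _ _ hv) huv
    exacts [.inl (step hab hu hv), .inr (step hab.symm hv hu)]
  · rintro (rfl | rfl)
    · exact cross a
    · obtain ⟨u, hu, v, hv, huv⟩ := cross b
      exact ⟨v, hv, u, hu, huv.symm⟩

lemma wheel_adj_some_some {a b : ZMod ℓ} :
    (wheel ℓ).Adj (some a) (some b) ↔ a ≠ b ∧ (b = a + 1 ∨ a = b + 1) := by
  simp [wheel]

lemma wheel_adj_none_some (a : ZMod ℓ) : (wheel ℓ).Adj none (some a) := by
  simp [wheel]

lemma TracesCycle.isInducedMinor_wheel (h : TracesCycle G f n) {B : Set V}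
    (hB : (G.induce B).Connected) (hBf : Disjoint B (Set.range f))
    (hT : T ⊆ Set.range f ∩ openNbhd G B) (hT₀ : T.ncard ≠ 0) :
    IsInducedMinor (wheel T.ncard) G := by
  have hTf := hT.trans Set.inter_subset_left
  have touch (z : ZMod T.ncard) : ∃ u ∈ B, ∃ v ∈ cycleArc f T z, G.Adj u v := by
    obtain ⟨x, hxT, hxz⟩ := h.exists_mem_inter_cycleArc hTf hT₀ z
    obtain ⟨u, hu, hux⟩ := (hT hxT).2
    exact ⟨u, hu, x, hxz, hux⟩
  have hdisj (z : ZMod T.ncard) : Disjoint B (cycleArc f T z) :=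
    hBf.mono_right (Set.image_subset_range _ _)
  refine ⟨fun a => a.elim B (cycleArc f T), ?_, ?_, ?_⟩
  · rintro (- | z)
    · exact hB
    · obtain ⟨x, -, hx⟩ := h.exists_mem_inter_cycleArc hTf hT₀ z
      exact (connected_iff _).2 ⟨h.preconnected_cycleArc z, ⟨x, hx⟩⟩
  · rintro (- | a) (- | b) hab
    · exact absurd rfl hab
    · exact hdisj b
    · exact (hdisj a).symm
    · refine Set.disjoint_left.2 fun x ha hb => hab ?_
      obtain ⟨i, rfl⟩ := Set.image_subset_range _ _ ha
      simp only [Option.elim_some, h.mem_cycleArc_iff hTf hT₀] at ha hb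
      rw [← ha, ← hb]
  · rintro (- | a) (- | b) hab
    · exact absurd rfl hab
    · exact iff_of_true (touch b) (wheel_adj_none_some b)
    · obtain ⟨u, hu, v, hv, huv⟩ := touch a
      exact iff_of_true ⟨v, hv, u, hu, huv.symm⟩ (wheel_adj_none_some a).symm
    · have hab' : a ≠ b := fun h => hab (congrArg some h)
      exact (h.exists_adj_cycleArc_iff hTf hT₀ hab').trans (by simp [wheel_adj_some_some, hab'])

theorem fewAttachments_of_not_isInducedMinor_wheel (hℓ : ℓ ≠ 0)
    (hG : ¬ IsInducedMinor (wheel ℓ) G) : FewAttachments G (ℓ - 1) := by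
  intro f n h B hB hBf
  by_contra hlt
  obtain ⟨T, hT, rfl⟩ := Set.exists_subset_card_eq
    (show ℓ ≤ (Set.range f ∩ openNbhd G B).ncard by omega)
  exact hG (h.isInducedMinor_wheel hB hBf hT hℓ)

end Wheel

section TracesPath

variable {G : SimpleGraph V} {p : ℕ → V} {j : ℕ}

lemma TracesPath.mono (hp : TracesPath G p j) {i : ℕ} (hij : i ≤ j) : TracesPath G p i where
  ne hab hb := hp.ne hab (hb.trans hij)
  adj_iff hab hb := hp.adj_iff hab (hb.trans hij)

lemma TracesPath.tail (hp : TracesPath G p (j + 1)) : TracesPath G (fun i => p (i + 1)) j where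
  ne hab hb := hp.ne (by omega) (by omega)
  adj_iff hab hb := (hp.adj_iff (by omega) (by omega)).trans (by omega)

lemma TracesPath.adj_succ (hp : TracesPath G p j) {i : ℕ} (hi : i < j) : G.Adj (p i) (p (i + 1)) :=
  (hp.adj_iff i.lt_succ_self hi).2 rfl

lemma TracesPath.lt_card [Finite V] (hp : TracesPath G p j) : j < Nat.card V := by
  have hinj : Function.Injective fun i : Fin (j + 1) => p i := by
    refine fun a b hab => Fin.ext ?_
    by_contra hne
    rcases Nat.lt_or_gt_of_ne hne with hlt | hlt
    exacts [hp.ne hlt (by omega) hab, hp.ne hlt (by omega) hab.symm]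
  simpa using Nat.card_le_card_of_injective _ hinj

lemma TracesPath.snoc (hp : TracesPath G p j) {v : V} (hne : ∀ i ≤ j, p i ≠ v)
    (hadj : ∀ i ≤ j, (G.Adj (p i) v ↔ i = j)) :
    TracesPath G (Function.update p (j + 1) v) (j + 1) where
  ne {a b} hab hb := by
    rw [Function.update_of_ne (by omega)]
    rcases hb.lt_or_eq with hb | rfl
    · rw [Function.update_of_ne hb.ne]; exact hp.ne hab (by omega)
    · rw [Function.update_self]; exact hne a (by omega)
  adj_iff {a b} hab hb := by
    rw [Function.update_of_ne (by omega)]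
    rcases hb.lt_or_eq with hb | rfl
    · rw [Function.update_of_ne hb.ne]; exact hp.adj_iff hab (by omega)
    · rw [Function.update_self, hadj a (by omega)]; omega

lemma TracesPath.mem_closedNbhd_interior (hp : TracesPath G p j) (hj : 2 ≤ j) {i : ℕ} (hi : i ≤ j) :
    p i ∈ closedNbhd G (p '' Set.Ioo 0 j) := by
  rcases Nat.eq_zero_or_pos i with rfl | hi0
  · exact .inr ⟨p 1, ⟨1, by simp; omega, rfl⟩, (hp.adj_succ (by omega)).symm⟩
  rcases hi.lt_or_eq with hij | rfl
  · exact .inl ⟨i, ⟨hi0, hij⟩, rfl⟩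
  · obtain ⟨i, rfl⟩ := Nat.exists_eq_add_of_le' hj
    exact .inr ⟨p (i + 1), ⟨i + 1, by simp, rfl⟩, hp.adj_succ (by omega)⟩

end TracesPath

/-- The invariant of the Gyárfás path argument: an induced path `p 0, …, p j` whose last vertex
still touches the hub `B` of the closed neighbourhood of the earlier ones. -/
structure IsGyarfasPath [Finite V] (G : SimpleGraph V) (w : V → ℝ) (p : ℕ → V) (j : ℕ)
    (B : Set V) : Prop where
  path : TracesPath G p j
  hub : IsHub G w (closedNbhd G (p '' Set.Iio j)) B
  last_mem : p j ∈ B ∪ openNbhd G B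

section Gyarfas

variable [Finite V] {G : SimpleGraph V} {w : V → ℝ}

lemma exists_isGyarfasPath_zero (hw : ∀ v, 0 ≤ w v) (h : ¬ IsBalancedSep G w ∅) :
    ∃ p B, IsGyarfasPath G w p 0 B := by
  obtain ⟨B, hB⟩ := exists_isHub h
  obtain ⟨x, hx⟩ := hB.heavy.nonempty hw
  refine ⟨fun _ => x, B, ⟨fun hab hb => by omega, fun hab hb => by omega⟩, ?_, .inl hx⟩
  simpa [closedNbhd] using hB

lemma IsGyarfasPath.exists_extension (hw : ∀ v, 0 ≤ w v) {p : ℕ → V} {j : ℕ} {B : Set V}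
    (hp : IsGyarfasPath G w p j B) (hbal : ¬ IsBalancedSep G w (closedNbhd G (p '' Set.Iic j))) :
    ∃ p' B', IsGyarfasPath G w p' (j + 1) B' := by
  obtain ⟨B', hB'⟩ := exists_isHub hbal
  have hp_mem {i : ℕ} (hi : i ≤ j) : p i ∈ p '' Set.Iic j := ⟨i, hi, rfl⟩
  have hpB' : p j ∉ B' := fun h => Set.disjoint_left.1 hB'.disjoint h (.inl (hp_mem le_rfl))
  have hB'B : B' ⊆ B := hp.hub.subset hw hB'.connected.preconnected (hB'.disjoint.mono_right
    (closedNbhd_mono (Set.image_mono Set.Iio_subset_Iic_self))) hB'.heavy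
  obtain ⟨v, hvB, hvB', u, huB', huv⟩ : ∃ v ∈ insert (p j) B, v ∉ B' ∧ v ∈ openNbhd G B' := by
    by_contra! h
    obtain ⟨x, hx⟩ := hB'.heavy.nonempty hw
    refine hpB' (subset_of_openNbhd_subset (S := (insert (p j) B)ᶜ) (preconnected_insert
      hp.hub.connected.preconnected hp.last_mem) disjoint_compl_right (fun v hv => ?_)
      ⟨x, .inr (hB'B hx), hx⟩ (Set.mem_insert _ _))
    by_cases hvB : v ∈ insert (p j) B
    · exact .inl (by_contra fun hvB' => h v hvB hvB' hv)
    · exact .inr hvB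
  have huN : u ∉ closedNbhd G (p '' Set.Iic j) := Set.disjoint_left.1 hB'.disjoint huB'
  have hvj : v ≠ p j := fun h => huN (.inr ⟨p j, hp_mem le_rfl, h ▸ huv.symm⟩)
  have hvN : v ∉ closedNbhd G (p '' Set.Iio j) :=
    Set.disjoint_left.1 hp.hub.disjoint (hvB.resolve_left hvj)
  have hne (i : ℕ) (hi : i ≤ j) : p i ≠ v := by
    rcases hi.lt_or_eq with hi | rfl
    exacts [fun h => hvN (.inl ⟨i, hi, h⟩), hvj.symm]
  have hadj_lt (i : ℕ) (hi : i < j) : ¬ G.Adj (p i) v := fun h => hvN (.inr ⟨_, ⟨i, hi, rfl⟩, h⟩)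
  have hadj : G.Adj (p j) v := by
    obtain ⟨i, hi, h⟩ | ⟨_, ⟨i, hi, rfl⟩, h⟩ :=
      (hB'.openNbhd_subset ⟨u, huB', huv⟩).resolve_left hvB'
    · exact absurd h (hne i hi)
    · rcases (Set.mem_Iic.1 hi).lt_or_eq with hi | rfl
      exacts [absurd h (hadj_lt i hi), h]
  have himage : Function.update p (j + 1) v '' Set.Iio (j + 1) = p '' Set.Iic j := by
    rw [Set.Iio_add_one_eq_Iic]
    refine Set.image_congr fun i hi => Function.update_of_ne ?_ _ _
    exact (Nat.lt_succ_of_le hi).ne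
  refine ⟨Function.update p (j + 1) v, B', hp.path.snoc hne fun i hi => ?_, himage ▸ hB', ?_⟩
  · exact ⟨fun h => hi.antisymm (not_lt.1 fun hlt => hadj_lt i hlt h), fun h => h ▸ hadj⟩
  · rw [Function.update_self]
    exact .inr ⟨u, huB', huv⟩

theorem exists_tracesPath_isBalancedSep (hw : ∀ v, 0 ≤ w v) (h : ¬ IsBalancedSep G w ∅) :
    ∃ j p, TracesPath G p j ∧ IsBalancedSep G w (closedNbhd G (p '' Set.Iic j)) := by
  by_contra! hno
  have hall (j : ℕ) : ∃ p B, IsGyarfasPath G w p j B := by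
    induction j with
    | zero => exact exists_isGyarfasPath_zero hw h
    | succ j ih =>
      obtain ⟨p, B, hp⟩ := ih
      exact hp.exists_extension hw (hno j p hp.path)
  obtain ⟨p, B, hp⟩ := hall (Nat.card V)
  exact hp.path.lt_card.false

lemma mem_openNbhd_of_isHub (hw : ∀ v, 0 ≤ w v) {X Y B : Set V} {x : V} (hXY : X ⊆ Y)
    (hx : x ∈ closedNbhd G Y) (hY : ¬ IsBalancedSep G w (closedNbhd G Y))
    (hxY : IsBalancedSep G w (closedNbhd G (insert x Y)))
    (hB : IsHub G w (closedNbhd G X) B) : x ∈ openNbhd G B := by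
  obtain ⟨B', hB'⟩ := exists_isHub hY
  have hsub : B' ⊆ B := hB.subset hw hB'.connected.preconnected
    (hB'.disjoint.mono_right (closedNbhd_mono hXY)) hB'.heavy
  obtain ⟨z, hzB', hz⟩ := hxY.inter_nonempty hw hB'.connected.preconnected hB'.heavy
  have hzY : z ∉ closedNbhd G Y := Set.disjoint_left.1 hB'.disjoint hzB'
  rcases hz with (rfl | hz) | ⟨a, rfl | ha, haz⟩
  · exact absurd hx hzY
  · exact absurd (.inl hz) hzY
  · exact ⟨z, hsub hzB', haz.symm⟩
  · exact absurd (.inr ⟨a, ha, haz⟩) hzY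

lemma TracesCycle.isBalancedSep_range (hw : ∀ v, 0 ≤ w v) {q : ℕ} (hG : FewAttachments G q)
    (hD : ∀ D : Set V, D.ncard ≤ q → ¬ IsBalancedSep G w (closedNbhd G D)) {f : ℕ → V} {n : ℕ}
    (hf : TracesCycle G f n) {P : Set V} (hPf : P ⊆ Set.range f)
    (hP : IsBalancedSep G w (closedNbhd G P)) : IsBalancedSep G w (Set.range f) := by
  by_contra hbal
  obtain ⟨B, hB⟩ := exists_isHub hbal
  set D := Set.range f ∩ openNbhd G B
  obtain ⟨B', hB'⟩ := exists_isHub (hD D (hG hf hB.connected hB.disjoint))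
  have hsub : B' ⊆ B := subset_of_openNbhd_subset hB'.connected.preconnected
    (hB'.disjoint.mono_right Set.subset_union_left) hB.openNbhd_subset_union_inter
    (hB'.heavy.inter_nonempty hw hB.heavy)
  obtain ⟨z, hzB', hz⟩ := hP.inter_nonempty hw hB'.connected.preconnected hB'.heavy
  rcases hz with hz | ⟨a, ha, haz⟩
  · exact Set.disjoint_left.1 hB.disjoint (hsub hzB') (hPf hz)
  · exact Set.disjoint_left.1 hB'.disjoint hzB'
      (.inr ⟨a, ⟨hPf ha, z, hsub hzB', haz.symm⟩, haz⟩)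

lemma exists_tracesCycle_of_minimal (hw : ∀ v, 0 ≤ w v) {p : ℕ → V} {j : ℕ} (hj : 2 ≤ j)
    (hp : TracesPath G p j) (hbal : IsBalancedSep G w (closedNbhd G (p '' Set.Iic j)))
    (hmin : ∀ i < j, ∀ p', TracesPath G p' i →
      ¬ IsBalancedSep G w (closedNbhd G (p' '' Set.Iic i))) :
    ∃ f n, TracesCycle G f n ∧ p '' Set.Iic j ⊆ Set.range f := by
  obtain ⟨k, rfl⟩ := Nat.exists_eq_add_of_le' (show 1 ≤ j by omega)
  have hinit : ¬ IsBalancedSep G w (closedNbhd G (p '' Set.Iic k)) :=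
    hmin k k.lt_succ_self p (hp.mono k.le_succ)
  have htail : ¬ IsBalancedSep G w (closedNbhd G (p '' Set.Icc 1 (k + 1))) := by
    have himage : (fun i => p (i + 1)) '' Set.Iic k = p '' Set.Icc 1 (k + 1) := by
      rw [← Set.image_image p (· + 1), ← Set.Icc_bot, Set.image_add_const_Icc, bot_eq_zero,
        zero_add]
    exact himage ▸ hmin k k.lt_succ_self _ hp.tail
  have hIoo {I : Set ℕ} (hI : Set.Ioo 0 (k + 1) ⊆ I) :
      closedNbhd G (p '' Set.Ioo 0 (k + 1)) ⊆ closedNbhd G (p '' I) :=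
    closedNbhd_mono (Set.image_mono hI)
  have hIic : Set.Ioo 0 (k + 1) ⊆ Set.Iic k := fun i hi => Nat.lt_succ_iff.1 hi.2
  have hIcc : Set.Ioo 0 (k + 1) ⊆ Set.Icc 1 (k + 1) := fun i hi => ⟨hi.1, hi.2.le⟩
  have hIic_insert : insert (k + 1) (Set.Iic k) = Set.Iic (k + 1) := by ext i; simp; omega
  have hIcc_insert : insert 0 (Set.Icc 1 (k + 1)) = Set.Iic (k + 1) := by ext i; simp; omega
  obtain ⟨B, hB⟩ := exists_isHub fun h => hinit (h.mono hw (hIoo hIic))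
  have hlast : p (k + 1) ∈ openNbhd G B :=
    mem_openNbhd_of_isHub hw (Set.image_mono hIic)
      (hIoo hIic (hp.mem_closedNbhd_interior hj le_rfl)) hinit
      (by rwa [← Set.image_insert_eq, hIic_insert]) hB
  have hfirst : p 0 ∈ openNbhd G B :=
    mem_openNbhd_of_isHub hw (Set.image_mono hIcc)
      (hIoo hIcc (hp.mem_closedNbhd_interior hj (Nat.zero_le _))) htail
      (by rwa [← Set.image_insert_eq, hIcc_insert]) hB
  obtain ⟨f, n, hf, -, hfp, -⟩ := hp.exists_tracesCycle hj hB.connected.preconnected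
    (fun i hi hiB => Set.disjoint_left.1 hB.disjoint hiB (hp.mem_closedNbhd_interior hj hi))
    hfirst hlast fun i hi hij ⟨u, hu, hui⟩ =>
      Set.disjoint_left.1 hB.disjoint hu (.inr ⟨p i, ⟨i, ⟨hi, hij⟩, rfl⟩, hui.symm⟩)
  exact ⟨f, n, hf, fun x ⟨i, hi, hix⟩ => ⟨i, (hfp i hi).trans hix⟩⟩

theorem exists_isBalancedSep_closedNbhd_or_cycle (hw : ∀ v, 0 ≤ w v) {q : ℕ} (hq : q ≠ 0)
    (hG : FewAttachments G q) :
    (∃ D : Set V, D.ncard ≤ q + 1 ∧ IsBalancedSep G w (closedNbhd G D)) ∨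
      ∃ f n, TracesCycle G f n ∧ IsBalancedSep G w (Set.range f) := by
  classical
  refine or_iff_not_imp_left.2 fun hD => ?_
  push Not at hD
  have hex := exists_tracesPath_isBalancedSep hw (by simpa [closedNbhd] using hD ∅)
  obtain ⟨p, hp, hbal⟩ := Nat.find_spec hex
  have hmin (i : ℕ) (hi : i < Nat.find hex) (p' : ℕ → V) (hp' : TracesPath G p' i) :
      ¬ IsBalancedSep G w (closedNbhd G (p' '' Set.Iic i)) :=
    fun h => Nat.find_min hex hi ⟨p', hp', h⟩
  have hcard : (p '' Set.Iic (Nat.find hex)).ncard ≤ Nat.find hex + 1 :=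
    (Set.ncard_image_le (Set.finite_Iic _)).trans (by simp [← Finset.coe_Iic])
  have hlong : q + 1 < Nat.find hex + 1 :=
    (lt_of_not_ge fun h => hD _ h hbal).trans_le hcard
  obtain ⟨f, n, hf, hpf⟩ := exists_tracesCycle_of_minimal hw (by omega) hp hbal hmin
  exact ⟨f, n, hf, hf.isBalancedSep_range hw hG (fun D h => hD D (by omega)) hpf hbal⟩

end Gyarfas

/-- The two induced cycles `c` and `c'`, of lengths `n` and `n'`, share exactly the path
`c 0, …, c L`, so that their union consists of three paths joining `c 0` to `c L`. -/
structure IsTheta (G : SimpleGraph V) (c : ℕ → V) (n : ℕ) (c' : ℕ → V) (n' L : ℕ) : Prop where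
  left : TracesCycle G c n
  right : TracesCycle G c' n'
  two_le : 2 ≤ L
  le_left : L + 2 ≤ n
  le_right : L + 2 ≤ n'
  eq : ∀ i ≤ L, c' i = c i
  disjoint : Disjoint (c' '' Set.Ioo L n') (Set.range c)

/-- For a theta `c`, `c'` with common path `c 0, …, c L`, the component of `G` minus the cycle `c`
that contains the rest of the cycle `c'`. -/
def farSide (G : SimpleGraph V) (c c' : ℕ → V) (L : ℕ) : Set V :=
  componentOf G (Set.range c) (c' (L + 1))

/-- The union of the two far sides of a theta. -/
def sides (G : SimpleGraph V) (c c' : ℕ → V) (L : ℕ) : Set V :=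
  farSide G c c' L ∪ farSide G c' c L

section Components

variable {G : SimpleGraph V} {S K B Q : Set V}

lemma openNbhd_union (A B : Set V) : openNbhd G (A ∪ B) = openNbhd G A ∪ openNbhd G B := by
  ext x
  simp only [openNbhd, Set.mem_union, Set.mem_ofPred_eq, or_and_right, exists_or]

lemma IsComponent.disjoint_of_not_subset (hK : IsComponent G S K)
    (hB : (G.induce B).Preconnected) (hBS : Disjoint B (S ∩ openNbhd G K)) (hBK : ¬ B ⊆ K) :
    Disjoint B K := by
  contrapose! hBK
  exact subset_of_openNbhd_subset hB hBS hK.openNbhd_subset_union_inter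
    (Set.not_disjoint_iff_nonempty_inter.1 hBK)

lemma subset_of_mem_openNbhd (hB : (G.induce B).Preconnected) (hBS : Disjoint B S)
    (hQ : openNbhd G Q ⊆ Q ∪ S) {x : V} (hxQ : x ∈ Q) (hxB : x ∈ openNbhd G B) : B ⊆ Q := by
  obtain ⟨u, hu, hux⟩ := hxB
  have huQ : u ∈ Q := (hQ ⟨x, hxQ, hux.symm⟩).resolve_right (Set.disjoint_left.1 hBS hu)
  exact subset_of_openNbhd_subset hB hBS hQ ⟨u, hu, huQ⟩

end Components

section Theta

variable {G : SimpleGraph V} {c c' : ℕ → V} {n n' L : ℕ}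

lemma TracesCycle.range_subset_union (h : TracesCycle G c n) (L : ℕ) :
    Set.range c ⊆ c '' Set.Iic L ∪ c '' Set.Ioo L n := by
  intro x hx
  obtain ⟨i, hi, rfl⟩ := h.exists_index hx
  rcases le_or_gt i L with hiL | hiL
  exacts [.inl ⟨i, hiL, rfl⟩, .inr ⟨i, ⟨hiL, hi⟩, rfl⟩]

lemma sides_comm : sides G c' c L = sides G c c' L := Set.union_comm _ _

namespace IsTheta

lemma image_Iic (T : IsTheta G c n c' n' L) : c' '' Set.Iic L = c '' Set.Iic L :=
  Set.image_congr T.eq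

lemma symm (T : IsTheta G c n c' n' L) : IsTheta G c' n' c n L where
  left := T.right
  right := T.left
  two_le := T.two_le
  le_left := T.le_right
  le_right := T.le_left
  eq i hi := (T.eq i hi).symm
  disjoint := by
    rw [Set.disjoint_left]
    rintro _ ⟨i, hi, rfl⟩ hi'
    rcases T.right.range_subset_union L hi' with h | h
    · rw [T.image_Iic] at h
      obtain ⟨j, hj, hji⟩ := h
      exact T.left.ne (hj.trans_lt hi.1) (by have := hi.2; omega) hji
    · exact Set.disjoint_left.1 T.disjoint h ⟨i, rfl⟩

lemma isComponent_farSide (T : IsTheta G c n c' n' L) :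
    IsComponent G (Set.range c) (farSide G c c' L) :=
  isComponent_componentOf
    (Set.disjoint_left.1 T.disjoint ⟨L + 1, ⟨L.lt_succ_self, T.le_right⟩, rfl⟩)

lemma image_subset_farSide (T : IsTheta G c n c' n' L) :
    c' '' Set.Ioo L n' ⊆ farSide G c c' L := by
  have hL : c' (L + 1) ∈ c' '' Set.Ioo L n' := ⟨L + 1, ⟨L.lt_succ_self, T.le_right⟩, rfl⟩
  exact T.isComponent_farSide.subset
    (preconnected_image_of_ordConnected T.right.adj_succ Set.ordConnected_Ioo) T.disjoint
    ⟨_, hL, mem_componentOf (Set.disjoint_left.1 T.disjoint hL)⟩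

lemma range_subset (T : IsTheta G c n c' n' L) :
    Set.range c' ⊆ c '' Set.Iic L ∪ farSide G c c' L :=
  (T.right.range_subset_union L).trans
    (Set.union_subset_union T.image_Iic.subset T.image_subset_farSide)

lemma zero_mem_openNbhd (T : IsTheta G c n c' n' L) : c 0 ∈ openNbhd G (farSide G c c' L) := by
  have := T.le_right
  refine ⟨c' (n' - 1), T.image_subset_farSide ⟨n' - 1, ⟨by omega, by omega⟩, rfl⟩, ?_⟩
  have h := T.right.adj_succ (n' - 1)
  rwa [show n' - 1 + 1 = n' by omega, T.right.periodic.eq, T.eq 0 (Nat.zero_le _)] at h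

lemma last_mem_openNbhd (T : IsTheta G c n c' n' L) : c L ∈ openNbhd G (farSide G c c' L) :=
  ⟨c' (L + 1), T.image_subset_farSide ⟨L + 1, ⟨L.lt_succ_self, T.le_right⟩, rfl⟩,
    T.eq L le_rfl ▸ (T.right.adj_succ L).symm⟩

lemma notMem_sides (T : IsTheta G c n c' n' L) {t : ℕ} (ht : t ≤ L) : c t ∉ sides G c c' L := by
  rintro (h | h)
  · exact Set.disjoint_left.1 T.isComponent_farSide.disjoint h ⟨t, rfl⟩
  · exact Set.disjoint_left.1 T.symm.isComponent_farSide.disjoint h ⟨t, T.eq t ht⟩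

lemma openNbhd_farSide_subset (T : IsTheta G c n c' n' L) :
    openNbhd G (farSide G c c' L) ⊆ sides G c c' L ∪ c '' Set.Iic L := by
  intro x hx
  rcases T.isComponent_farSide.openNbhd_subset hx with h | h
  · exact .inl (.inl h)
  · exact (T.left.range_subset_union L h).symm.imp_left fun h =>
      .inr (T.symm.image_subset_farSide h)

lemma openNbhd_sides_subset (T : IsTheta G c n c' n' L)
    (h : ∀ t, 0 < t → t < L → c t ∉ openNbhd G (sides G c c' L)) :
    openNbhd G (sides G c c' L) ⊆ sides G c c' L ∪ {c 0, c L} := by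
  have hpath : openNbhd G (sides G c c' L) ⊆ sides G c c' L ∪ c '' Set.Iic L := by
    have := T.symm.openNbhd_farSide_subset
    rw [sides_comm, T.image_Iic] at this
    rw [sides, openNbhd_union]
    exact Set.union_subset T.openNbhd_farSide_subset this
  intro x hx
  rcases hpath hx with hxQ | ⟨i, hi, rfl⟩
  · exact .inl hxQ
  rcases Nat.eq_zero_or_pos i with rfl | hi0
  · exact .inr (.inl rfl)
  rcases (Set.mem_Iic.1 hi).lt_or_eq with hiL | rfl
  exacts [absurd hx (h i hi0 hiL), .inr (.inr rfl)]

lemma disjoint_sides (T : IsTheta G c n c' n' L)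
    (h : ∀ t, 0 < t → t < L → c t ∉ openNbhd G (sides G c c' L)) {B : Set V}
    (hB : (G.induce B).Preconnected) (hBc : Disjoint B {c 0, c L}) {t : ℕ} (ht : t ≤ L)
    (htB : c t ∈ B) : Disjoint B (sides G c c' L) := by
  by_contra hmeet
  exact T.notMem_sides ht (subset_of_openNbhd_subset hB hBc (T.openNbhd_sides_subset h)
    (Set.not_disjoint_iff_nonempty_inter.1 hmeet) htB)

lemma isBalancedSep_left [Finite V] {w : V → ℝ} (hw : ∀ v, 0 ≤ w v) (T : IsTheta G c n c' n' L)
    (hc' : IsBalancedSep G w (Set.range c')) {B : Set V} (hB : IsHeavy w B)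
    (hBK : Disjoint B (farSide G c c' L)) : IsBalancedSep G w (Set.range c) := by
  by_contra hc
  obtain ⟨B', hB'⟩ := exists_isHub hc
  obtain ⟨x, hxB', hx⟩ := hc'.inter_nonempty hw hB'.connected.preconnected hB'.heavy
  have hxK : x ∈ farSide G c c' L := (T.range_subset hx).resolve_left fun h =>
    Set.disjoint_left.1 hB'.disjoint hxB' (Set.image_subset_range _ _ h)
  have hsub : B' ⊆ farSide G c c' L := T.isComponent_farSide.subset hB'.connected.preconnected
    hB'.disjoint ⟨x, hxB', hxK⟩
  obtain ⟨y, hyB, hyB'⟩ := hB.inter_nonempty hw hB'.heavy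
  exact Set.disjoint_left.1 hBK hyB (hsub hyB')

end IsTheta

end Theta

/-- A theta whose two cycles are balanced separators. -/
structure IsBalancedTheta [Finite V] (G : SimpleGraph V) (w : V → ℝ) (c : ℕ → V) (n : ℕ)
    (c' : ℕ → V) (n' L : ℕ) : Prop extends IsTheta G c n c' n' L where
  balanced_left : IsBalancedSep G w (Set.range c)
  balanced_right : IsBalancedSep G w (Set.range c')

/-- The hypothesis refuted below: components attach to induced cycles in at most `q` vertices, and
no balanced separator has at most `q ^ 2` vertices. -/
structure IsRobust [Finite V] (G : SimpleGraph V) (w : V → ℝ) (q : ℕ) : Prop where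
  nonneg : ∀ v, 0 ≤ w v
  two_le : 2 ≤ q
  fewAttachments : FewAttachments G q
  not_isBalancedSep : ∀ S : Set V, S.ncard ≤ q ^ 2 → ¬ IsBalancedSep G w S

/-- The arc `f 0, …, f m` of the cycle `f` of length `n` is a gap between two attachments of `K`:
exactly its ends have a neighbour in `K`. -/
structure IsGap (G : SimpleGraph V) (f : ℕ → V) (n : ℕ) (K : Set V) (m : ℕ) : Prop where
  two_le : 2 ≤ m
  add_two_le : m + 2 ≤ n
  left : f 0 ∈ openNbhd G K
  right : f m ∈ openNbhd G K
  notMem : ∀ t, 0 < t → t < m → f t ∉ openNbhd G K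

/-- The gap `f 0, …, f m` of the component `K` forms a balanced theta with an arc `h` through `K`,
and the connected heavy set `B` meets the cycle `f` and `K` only inside the gap. -/
structure IsHeavyGap [Finite V] (G : SimpleGraph V) (w : V → ℝ) (f : ℕ → V) (n : ℕ) (K : Set V)
    (m : ℕ) (h : ℕ → V) (n' : ℕ) (B : Set V) : Prop where
  gap : IsGap G f n K m
  component : IsComponent G (Set.range f) K
  theta : IsBalancedTheta G w f n h n' m
  arc_subset : h '' Set.Ioo m n' ⊆ K
  preconnected : (G.induce B).Preconnected
  heavy : IsHeavy w B
  inter_subset : B ∩ (Set.range f ∪ K) ⊆ f '' Set.Ioo 0 m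

section Gaps

variable {G : SimpleGraph V} {f : ℕ → V} {n m : ℕ} {K : Set V}

lemma IsGap.unique {m' : ℕ} (h : IsGap G f n K m) (h' : IsGap G f n K m') : m = m' := by
  have hm := h.two_le
  have hm' := h'.two_le
  by_contra hne
  rcases Nat.lt_or_gt_of_ne hne with hlt | hlt
  exacts [h'.notMem m (by omega) hlt h.right, h.notMem m' (by omega) hlt h'.right]

lemma IsGap.exists_isTheta (hgap : IsGap G f n K m) (hf : TracesCycle G f n)
    (hK : IsComponent G (Set.range f) K) :
    ∃ h n', IsTheta G f n h n' m ∧ h '' Set.Ioo m n' ⊆ K := by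
  obtain ⟨h, n', hh, hn', heq, harc⟩ := (hf.tracesPath hgap.add_two_le).exists_tracesCycle
    hgap.two_le hK.connected.preconnected
    (fun i _ hi => Set.disjoint_left.1 hK.disjoint hi ⟨i, rfl⟩) hgap.left hgap.right hgap.notMem
  have hsub : h '' Set.Ioo m n' ⊆ K := by
    rintro _ ⟨i, hi, rfl⟩
    exact harc i hi.1 hi.2
  exact ⟨h, n', ⟨hf, hh, hgap.two_le, hgap.add_two_le, hn', heq, hK.disjoint.mono_left hsub⟩, hsub⟩

lemma TracesCycle.disjoint_image_Ioo (hf : TracesCycle G f n) {p r : ℕ} (hr : r < p + n) :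
    Disjoint (f '' Set.Ioo p r) {f p, f r} := by
  rw [Set.disjoint_left]
  rintro _ ⟨i, ⟨hpi, hir⟩, rfl⟩ (h | h)
  exacts [hf.ne hpi (by omega) h.symm, hf.ne hir (by omega) h]

lemma exists_lt_lt_forall_not {P : ℕ → Prop} {i j r : ℕ} (hi : P i) (hij : i ≤ j) (hj : ¬ P j)
    (hjr : j ≤ r) (hr : P r) :
    ∃ a b, a < j ∧ j < b ∧ P a ∧ P b ∧ ∀ s, a < s → s < b → ¬ P s := by
  classical
  have hnext : ∃ b, j ≤ b ∧ P b := ⟨r, hjr, hr⟩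
  have ha : P (Nat.findGreatest P j) := Nat.findGreatest_spec hij hi
  obtain ⟨hjb, hb⟩ := Nat.find_spec hnext
  refine ⟨_, _, (Nat.findGreatest_le j).lt_of_ne fun h => hj (h ▸ ha),
    hjb.lt_of_ne fun h => hj (h ▸ hb), ha, hb, fun s has hsb hs => ?_⟩
  rcases le_or_gt s j with hsj | hjs
  exacts [Nat.findGreatest_is_greatest has hsj hs, Nat.find_min hnext hsb ⟨hjs.le, hs⟩]

lemma TracesCycle.add_two_le_of_forall_notMem (hf : TracesCycle G f n) {x y : V}
    (hx : x ∈ Set.range f ∩ K) (hy : y ∈ Set.range f ∩ K) (hxy : x ≠ y) (hadj : ¬ G.Adj x y)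
    {a b : ℕ} (hab : ∀ s, a < s → s < b → f s ∉ K) : b + 2 ≤ a + n := by
  obtain ⟨i, hai, hin, rfl⟩ := hf.exists_index_ge hx.1 (a + 1)
  obtain ⟨j, haj, hjn, rfl⟩ := hf.exists_index_ge hy.1 (a + 1)
  have hbi : b ≤ i := not_lt.1 fun h => hab i hai h hx.2
  have hbj : b ≤ j := not_lt.1 fun h => hab j haj h hy.2
  have hne : i ≠ j := fun h => hxy (h ▸ rfl)
  have hsucc : i + 1 ≠ j := fun h => hadj (h ▸ hf.adj_succ i)
  have hsucc' : j + 1 ≠ i := fun h => hadj (h ▸ (hf.adj_succ j).symm)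
  omega

lemma TracesCycle.exists_isGap_around (hf : TracesCycle G f n) {x y z : V}
    (hx : x ∈ Set.range f ∩ openNbhd G K) (hy : y ∈ Set.range f ∩ openNbhd G K) (hxy : x ≠ y)
    (hadj : ¬ G.Adj x y) (hz : z ∈ Set.range f) (hzK : z ∉ openNbhd G K) :
    ∃ k < n, ∃ m, IsGap G (fun t => f (t + k)) n K m ∧ ∃ t ∈ Set.Ioo 0 m, f (t + k) = z := by
  obtain ⟨i, hin, hi⟩ := hf.exists_index hx.1
  obtain ⟨j, hnj, -, rfl⟩ := hf.exists_index_ge hz n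
  obtain ⟨r, hjr, -, hr⟩ := hf.exists_index_ge hx.1 j
  obtain ⟨k, b, hkj, hjb, hkK, hbK, hbetween⟩ := exists_lt_lt_forall_not
    (P := fun i => f i ∈ openNbhd G K) (hi ▸ hx.2) (hin.le.trans hnj) hzK hjr (hr ▸ hx.2)
  have hlen := hf.add_two_le_of_forall_notMem hx hy hxy hadj hbetween
  have hmod (t : ℕ) : f (t + k % n) = f (t + k) := by
    rw [← hf.periodic.map_mod_nat, Nat.add_mod_mod, hf.periodic.map_mod_nat]
  refine ⟨k % n, Nat.mod_lt _ (by omega), b - k, ?_⟩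
  simp only [hmod]
  refine ⟨⟨by omega, by omega, by simpa using hkK, ?_, fun t ht htb =>
    hbetween _ (by omega) (by omega)⟩, j - k, ⟨by omega, by omega⟩, ?_⟩
  · simpa [Nat.sub_add_cancel (hkj.trans hjb).le] using hbK
  · rw [Nat.sub_add_cancel hkj.le]

end Gaps

section HeavyGaps

variable [Finite V] {G : SimpleGraph V} {w : V → ℝ} {q n m : ℕ} {f : ℕ → V} {K B S : Set V}

lemma IsBalancedTheta.symm {c c' : ℕ → V} {n' L : ℕ} (T : IsBalancedTheta G w c n c' n' L) :
    IsBalancedTheta G w c' n' c n L :=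
  ⟨T.toIsTheta.symm, T.balanced_right, T.balanced_left⟩

lemma IsRobust.exists_isHub (hR : IsRobust G w q) (hS : S.ncard ≤ 4) : ∃ B, IsHub G w S B :=
  _root_.exists_isHub (hR.not_isBalancedSep S (hS.trans (Nat.pow_le_pow_left hR.two_le 2)))

lemma IsRobust.exists_isHub_pair (hR : IsRobust G w q) (x y : V) : ∃ B, IsHub G w {x, y} B :=
  hR.exists_isHub ((Set.ncard_insert_le _ _).trans (by rw [Set.ncard_singleton]; norm_num))

lemma IsHeavyGap.disjoint_ends {h : ℕ → V} {n' : ℕ} (H : IsHeavyGap G w f n K m h n' B) :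
    Disjoint B {f 0, f m} := by
  have hends : {f 0, f m} ⊆ Set.range f ∪ K := by
    rintro _ (rfl | rfl)
    exacts [.inl ⟨0, rfl⟩, .inl ⟨m, rfl⟩]
  have hm := H.gap.add_two_le
  exact Set.disjoint_left.2 fun x hxB hx => Set.disjoint_left.1
    (H.theta.left.disjoint_image_Ioo (by omega)) (H.inter_subset ⟨hxB, hends hx⟩) hx

lemma IsRobust.exists_gapSeparator (hR : IsRobust G w q) (hf : TracesCycle G f n)
    (hbal : IsBalancedSep G w (Set.range f)) (hK : IsComponent G (Set.range f) K) :
    ∃ S : Set V, S.ncard ≤ q ∧ f 0 ∈ S ∧ ∀ m, IsGap G f n K m → ∀ B,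
      (G.induce B).Preconnected → IsHeavy w B → Disjoint B S → Disjoint B K →
      (B ∩ f '' Set.Ioo 0 m).Nonempty → ∃ h n', IsHeavyGap G w f n K m h n' B := by
  by_cases hm : ∃ m, IsGap G f n K m
  swap
  · refine ⟨{f 0}, ?_, rfl, fun m hgap => absurd ⟨m, hgap⟩ hm⟩
    rw [Set.ncard_singleton]
    exact one_le_two.trans hR.two_le
  obtain ⟨m, hgap⟩ := hm
  obtain ⟨h, n', T, harc⟩ := hgap.exists_isTheta hf hK
  have hfar := T.symm.isComponent_farSide
  refine ⟨Set.range h ∩ openNbhd G (farSide G h f m),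
    hR.fewAttachments T.right hfar.connected hfar.disjoint,
    T.eq 0 (Nat.zero_le _) ▸ ⟨⟨0, rfl⟩, T.symm.zero_mem_openNbhd⟩, ?_⟩
  intro m' hgap' B hB hBw hBS hBK hBm
  obtain rfl := hgap'.unique hgap
  obtain ⟨_, htB, t, ht, rfl⟩ := hBm
  have hBfar : Disjoint B (farSide G h f m') := by
    refine hfar.disjoint_of_not_subset hB hBS fun hsub => ?_
    exact Set.disjoint_left.1 hfar.disjoint (hsub htB) ⟨t, T.eq t ht.2.le⟩
  refine ⟨h, n', hgap, hK, ⟨T, hbal, T.symm.isBalancedSep_left hR.nonneg hbal hBw hBfar⟩, harc, hB,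
    hBw, ?_⟩
  rintro x ⟨hxB, hx | hx⟩
  swap
  · exact absurd hx (Set.disjoint_left.1 hBK hxB)
  rcases hf.range_subset_union m' hx with ⟨i, hi, rfl⟩ | hx
  swap
  · exact absurd (T.symm.image_subset_farSide hx) (Set.disjoint_left.1 hBfar hxB)
  refine ⟨i, ⟨Nat.pos_of_ne_zero ?_, lt_of_le_of_ne hi ?_⟩, rfl⟩ <;> rintro rfl
  · exact Set.disjoint_left.1 hBS hxB (T.eq 0 hi ▸ ⟨⟨0, rfl⟩, T.symm.zero_mem_openNbhd⟩)
  · exact Set.disjoint_left.1 hBS hxB (T.eq i le_rfl ▸ ⟨⟨i, rfl⟩, T.symm.last_mem_openNbhd⟩)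

lemma TracesCycle.card_indices_le_ncard [DecidablePred (f · ∈ S)] (hf : TracesCycle G f n) :
    ((Finset.range n).filter (f · ∈ S)).card ≤ (Set.range f ∩ S).ncard := by
  rw [← Set.ncard_coe_finset]
  refine Set.ncard_le_ncard_of_injOn f (fun i hi => ?_) fun i hi j hj hij => ?_
  · exact ⟨⟨i, rfl⟩, (Finset.mem_filter.1 hi).2⟩
  · exact hf.index_eq (by simpa using (Finset.mem_filter.1 hi).1)
      (by simpa using (Finset.mem_filter.1 hj).1) hij

/-- Removing a small separator for each gap of `K` at once leaves a heavy component, and `f` being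
balanced forces this component into one of the gaps. -/
lemma IsRobust.exists_isHeavyGap (hR : IsRobust G w q) (hf : TracesCycle G f n)
    (hbal : IsBalancedSep G w (Set.range f)) (hK : IsComponent G (Set.range f) K) {x y : V}
    (hx : x ∈ Set.range f ∩ openNbhd G K) (hy : y ∈ Set.range f ∩ openNbhd G K) (hxy : x ≠ y)
    (hadj : ¬ G.Adj x y) :
    ∃ k < n, ∃ m h n' B, IsHeavyGap G w (fun t => f (t + k)) n K m h n' B := by
  classical
  have hshift (i : ℕ) := hR.exists_gapSeparator (hf.shift i) (K := K)
    (by rwa [hf.range_shift]) (by rwa [hf.range_shift])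
  choose S hcard hmem hsep using hshift
  set T := (Finset.range n).filter (f · ∈ openNbhd G K)
  set U : Set V := ⋃ i ∈ T, S i
  have hUcard : U.ncard ≤ q ^ 2 := calc
    U.ncard ≤ ∑ i ∈ T, (S i).ncard := Finset.set_ncard_biUnion_le T S
    _ ≤ T.card * q := Finset.sum_le_card_nsmul T _ q fun i _ => hcard i
    _ ≤ q * q := Nat.mul_le_mul_right q <|
      hf.card_indices_le_ncard.trans (hR.fewAttachments hf hK.connected hK.disjoint)
    _ = q ^ 2 := (sq q).symm
  obtain ⟨B, hB⟩ := _root_.exists_isHub (hR.not_isBalancedSep U hUcard)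
  have hSU {i : ℕ} (hi : i < n) (hiK : f i ∈ openNbhd G K) : S i ⊆ U :=
    Set.subset_biUnion_of_mem (u := S) (Finset.mem_filter.2 ⟨Finset.mem_range.2 hi, hiK⟩)
  have hattU : Set.range f ∩ openNbhd G K ⊆ U := by
    rintro _ ⟨hx, hxK⟩
    obtain ⟨i, hi, rfl⟩ := hf.exists_index hx
    exact hSU hi hxK (by simpa using hmem i)
  obtain ⟨z, hzB, hz⟩ := hbal.inter_nonempty hR.nonneg hB.connected.preconnected hB.heavy
  have hBK : Disjoint B K := hK.disjoint_of_not_subset hB.connected.preconnected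
    (hB.disjoint.mono_right hattU) fun hsub => Set.disjoint_left.1 hK.disjoint (hsub hzB) hz
  have hzK : z ∉ openNbhd G K := fun h => Set.disjoint_left.1 hB.disjoint hzB (hattU ⟨hz, h⟩)
  obtain ⟨k, hk, m, hgap, t, ht, rfl⟩ := hf.exists_isGap_around hx hy hxy hadj hz hzK
  obtain ⟨h, n', H⟩ := hsep k m hgap B hB.connected.preconnected hB.heavy
    (hB.disjoint.mono_right (hSU hk (by simpa using hgap.left))) hBK ⟨_, hzB, t, ht, rfl⟩
  exact ⟨k, hk, m, h, n', B, H⟩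

end HeavyGaps

/-- Some heavy gap has length `m`. -/
def HasHeavyGap [Finite V] (G : SimpleGraph V) (w : V → ℝ) (m : ℕ) : Prop :=
  ∃ f n K h n' B, IsHeavyGap G w f n K m h n' B

/-- The two vertices `f 0` and `f m` of the balanced cycle `f` cut off a heavy component `M` that
contains no vertex of the arc `f m, …, f n`. -/
structure IsCut [Finite V] (G : SimpleGraph V) (w : V → ℝ) (f : ℕ → V) (n m : ℕ) (M : Set V) :
    Prop where
  cycle : TracesCycle G f n
  balanced : IsBalancedSep G w (Set.range f)
  lt : m < n
  hub : IsHub G w {f 0, f m} M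
  inter_subset : M ∩ Set.range f ⊆ f '' Set.Ioo 0 m

/-- Some cut has an arc of length `m`. -/
def HasCut [Finite V] (G : SimpleGraph V) (w : V → ℝ) (m : ℕ) : Prop :=
  ∃ f n M, IsCut G w f n m M

/-- The arc `f (p + 1), …, f (r - 1)` together with all components of `G` minus the cycle `f` that
attach to it. -/
def arcHull (G : SimpleGraph V) (f : ℕ → V) (p r : ℕ) : Set V :=
  f '' Set.Ioo p r ∪
    ⋃₀ {D | IsComponent G (Set.range f) D ∧ ∃ i ∈ Set.Ioo p r, f i ∈ openNbhd G D}

section Arcs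

variable {G : SimpleGraph V} {f : ℕ → V} {n p r : ℕ}

lemma TracesCycle.openNbhd_arcHull_subset (hf : TracesCycle G f n) (hr : r < p + n)
    (hcross : ∀ D, IsComponent G (Set.range f) D → (∃ i ∈ Set.Ioo p r, f i ∈ openNbhd G D) →
      ∀ s ∈ Set.Ioo r (p + n), f s ∉ openNbhd G D) :
    openNbhd G (arcHull G f p r) ⊆ arcHull G f p r ∪ {f p, f r} := by
  rintro x ⟨u, hu, hux⟩
  by_cases hx : x ∈ Set.range f
  · obtain ⟨j, hpj, hj, rfl⟩ := hf.exists_index_ge hx p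
    rcases hpj.eq_or_lt with rfl | hpj
    · exact .inr (.inl rfl)
    rcases lt_trichotomy j r with hjr | rfl | hrj
    · exact .inl (.inl ⟨j, ⟨hpj, hjr⟩, rfl⟩)
    · exact .inr (.inr rfl)
    · rcases hu with ⟨i, ⟨hpi, hir⟩, rfl⟩ | ⟨D, ⟨hD, hatt⟩, huD⟩
      · have := (hf.adj_iff (by omega) (by omega)).1 hux
        omega
      · exact absurd ⟨u, huD, hux⟩ (hcross D hD hatt j ⟨hrj, hj⟩)
  · refine .inl (.inr ?_)
    rcases hu with ⟨i, hi, rfl⟩ | ⟨D, hD, huD⟩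
    · exact ⟨componentOf G (Set.range f) x, ⟨isComponent_componentOf hx, i, hi, x,
        mem_componentOf hx, hux.symm⟩, mem_componentOf hx⟩
    · exact ⟨D, hD, (hD.1.openNbhd_subset ⟨u, huD, hux⟩).resolve_right hx⟩

lemma TracesCycle.notMem_arcHull (hf : TracesCycle G f n) {s : ℕ} (hrs : r < s)
    (hs : s < p + n) : f s ∉ arcHull G f p r := by
  rintro (⟨i, ⟨hpi, hir⟩, his⟩ | ⟨D, ⟨hD, -⟩, hsD⟩)
  · exact hf.ne (by omega) (by omega) his
  · exact Set.disjoint_left.1 hD.disjoint hsD ⟨s, rfl⟩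

end Arcs

section Cuts

variable [Finite V] {G : SimpleGraph V} {w : V → ℝ} {q n m : ℕ} {f : ℕ → V}

lemma IsBalancedTheta.exists_isHeavyGap {c c' : ℕ → V} {n' L : ℕ} (hR : IsRobust G w q)
    (T : IsBalancedTheta G w c n c' n' L) :
    ∃ k m h m' B, k + m ≤ L ∧
      IsHeavyGap G w (fun t => c (t + k)) n (farSide G c c' L) m h m' B := by
  have hL := T.two_le
  have hLn := T.le_left
  obtain ⟨k, hkn, m, h, m', B, H⟩ := hR.exists_isHeavyGap T.left T.balanced_left
    T.isComponent_farSide ⟨⟨0, rfl⟩, T.zero_mem_openNbhd⟩ ⟨⟨L, rfl⟩, T.last_mem_openNbhd⟩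
    (T.left.ne (by omega) (by omega)) (T.left.not_adj (by omega) (by omega))
  have hnotMem {i : ℕ} (hki : k < i) (hi : i < k + m) : c i ∉ openNbhd G (farSide G c c' L) := by
    simpa [Nat.sub_add_cancel hki.le] using H.gap.notMem (i - k) (by omega) (by omega)
  have hkm : k + m ≤ n := by
    by_contra! hlt
    exact hnotMem hkn hlt (T.left.periodic.eq ▸ T.zero_mem_openNbhd)
  have hkL : k < L := by
    by_contra! hLk
    obtain ⟨x, hxB, hx⟩ := T.balanced_right.inter_nonempty hR.nonneg H.preconnected H.heavy
    have hx' : x ∈ Set.range (fun t => c (t + k)) ∪ farSide G c c' L := by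
      rw [T.left.range_shift]
      exact (T.range_subset hx).imp_left (Set.image_subset_range _ _ ·)
    obtain ⟨t, ⟨ht, htm⟩, rfl⟩ := H.inter_subset ⟨hxB, hx'⟩
    exact Set.disjoint_left.1 T.symm.disjoint ⟨t + k, ⟨by omega, by omega⟩, rfl⟩ hx
  refine ⟨k, m, h, m', B, ?_, H⟩
  by_contra! hlt
  exact hnotMem hkL hlt T.last_mem_openNbhd

lemma hasCut_of_isHub (hf : TracesCycle G f n) (hbal : IsBalancedSep G w (Set.range f)) {p r : ℕ}
    (hpr : p ≤ r) (hr : r < p + n) {B : Set V} (hB : IsHub G w {f p, f r} B)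
    (hBf : ∀ s, r < s → s < p + n → f s ∉ B) : HasCut G w (r - p) := by
  refine ⟨fun i => f (i + p), n, B, hf.shift p, by rwa [hf.range_shift], by omega, ?_, ?_⟩
  · simpa [show r - p + p = r by omega] using hB
  · rw [hf.range_shift]
    rintro _ ⟨hxB, hx⟩
    obtain ⟨j, hpj, hj, rfl⟩ := hf.exists_index_ge hx p
    have hends := Set.disjoint_left.1 hB.disjoint hxB
    refine ⟨j - p, ⟨Nat.pos_of_ne_zero fun h => ?_, ?_⟩, by simp [Nat.sub_add_cancel hpj]⟩
    · exact hends (.inl (by rw [show j = p by omega]))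
    · by_contra! hrj
      rcases (show r ≤ j by omega).eq_or_lt with rfl | hrj
      exacts [hends (.inr rfl), hBf j hrj hj hxB]

/-- Both cycles of the theta of a shortest heavy gap bound the whole gap, so its interior attaches
to neither side of the theta and its ends separate it from both sides. -/
lemma hasCut_of_hasHeavyGap (hR : IsRobust G w q) (hm : HasHeavyGap G w m)
    (hmin : ∀ m' < m, ¬ HasHeavyGap G w m') : HasCut G w m := by
  obtain ⟨f, n, K, h, n', B, H⟩ := hm
  have hgap := H.gap.two_le
  have hn := H.gap.add_two_le
  have T := H.theta.symm
  obtain ⟨k, m', h', l', B', hkm, H'⟩ := T.exists_isHeavyGap hR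
  have hm' : m ≤ m' := by
    by_contra! hlt
    exact hmin m' hlt ⟨_, _, _, _, _, _, H'⟩
  obtain rfl : k = 0 := by omega
  obtain rfl : m' = m := by omega
  have hsub : farSide G f h m' ⊆ K := H.component.subset
    H.theta.isComponent_farSide.connected.preconnected H.theta.isComponent_farSide.disjoint
    (Set.Nonempty.mono (Set.subset_inter H.theta.image_subset_farSide H.arc_subset)
      ⟨h (m' + 1), m' + 1, ⟨m'.lt_succ_self, H.theta.le_right⟩, rfl⟩)
  have hinterior : ∀ t, 0 < t → t < m' → h t ∉ openNbhd G (sides G h f m') := by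
    intro t ht htm
    rw [sides, openNbhd_union, Set.mem_union, not_or]
    refine ⟨H'.gap.notMem t ht htm, fun hmem => ?_⟩
    rw [H.theta.eq t htm.le] at hmem
    exact H.gap.notMem t ht htm (openNbhd_mono hsub hmem)
  obtain ⟨M, hM⟩ := hR.exists_isHub_pair (f 0) (f m')
  have hBM : B ⊆ M := hM.subset hR.nonneg H.preconnected H.disjoint_ends H.heavy
  obtain ⟨x, hxB, hx⟩ := H.theta.balanced_left.inter_nonempty hR.nonneg H.preconnected H.heavy
  obtain ⟨t, ⟨-, htm⟩, rfl⟩ := H.inter_subset ⟨hxB, .inl hx⟩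
  have hMsides : Disjoint M (sides G h f m') := T.disjoint_sides hinterior hM.connected.preconnected
    (by rw [← T.eq 0 (Nat.zero_le _), ← T.eq m' le_rfl]; exact hM.disjoint) htm.le
    (T.eq t htm.le ▸ hBM hxB)
  refine hasCut_of_isHub (p := 0) H.theta.left H.theta.balanced_left (by omega) (by omega) hM
    fun s hms hs hsM => Set.disjoint_left.1 hMsides hsM (.inl (T.image_subset_farSide ?_))
  exact ⟨s, ⟨hms, by omega⟩, rfl⟩

/-- If no component crosses, then the hub of the two ends of the arc stays inside the hull of the
arc. -/
lemma hasCut_or_exists_crossing (hR : IsRobust G w q) (hf : TracesCycle G f n)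
    (hbal : IsBalancedSep G w (Set.range f)) {p r : ℕ} (hr : r < p + n) {B : Set V}
    (hB : (G.induce B).Preconnected) (hBw : IsHeavy w B) (hBends : Disjoint B {f p, f r})
    {t : ℕ} (hpt : p < t) (htr : t < r) (htB : f t ∈ B) :
    HasCut G w (r - p) ∨ ∃ D, IsComponent G (Set.range f) D ∧
      (∃ i ∈ Set.Ioo p r, f i ∈ openNbhd G D) ∧ ∃ s ∈ Set.Ioo r (p + n), f s ∈ openNbhd G D := by
  refine or_iff_not_imp_right.2 fun hno => ?_
  push Not at hno
  obtain ⟨M, hM⟩ := hR.exists_isHub_pair (f p) (f r)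
  have hhull : M ⊆ arcHull G f p r := subset_of_openNbhd_subset hM.connected.preconnected
    hM.disjoint (hf.openNbhd_arcHull_subset hr hno)
    ⟨f t, hM.subset hR.nonneg hB hBends hBw htB, .inl ⟨t, ⟨hpt, htr⟩, rfl⟩⟩
  exact hasCut_of_isHub hf hbal (by omega) hr hM fun s hrs hs hsM =>
    hf.notMem_arcHull hrs hs (hhull hsM)

end Cuts

/-- A cut such that no cut and no heavy gap is shorter. -/
structure IsMinimalCut [Finite V] (G : SimpleGraph V) (w : V → ℝ) (f : ℕ → V) (n m : ℕ)
    (M : Set V) : Prop extends IsCut G w f n m M where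
  not_hasCut : ∀ m' < m, ¬ HasCut G w m'
  not_hasHeavyGap : ∀ m' < m, ¬ HasHeavyGap G w m'

/-- Two detours through `M` around the arc `f e₁, …, f e₂` of the cycle `f` of length `n`: together
with the complementary arc `f e₂, …, f (n + e₁)`, which is their common path, they form the
cycles `c` and `c'` of a balanced theta. One of them meets the interior of the avoided arc. -/
structure IsBypass [Finite V] (G : SimpleGraph V) (w : V → ℝ) (f : ℕ → V) (n m : ℕ) (M : Set V)
    (e₁ e₂ L : ℕ) (c : ℕ → V) (n₁ : ℕ) (c' : ℕ → V) (n₂ : ℕ) : Prop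
    extends IsBalancedTheta G w c n₁ c' n₂ L where
  add_two_le : e₁ + 2 ≤ e₂
  le_cut : e₂ ≤ m
  add_eq : e₂ + L = n + e₁
  eq_cycle : ∀ i ≤ L, c i = f (e₂ + i)
  left_subset : c '' Set.Ioo L n₁ ⊆ M
  right_subset : c' '' Set.Ioo L n₂ ⊆ M
  meets : (f '' Set.Ioo e₁ e₂ ∩ (c '' Set.Ioo L n₁ ∪ c' '' Set.Ioo L n₂)).Nonempty

/-- Some bypass avoids the arc `f e₁, …, f e₂`. -/
def HasBypass [Finite V] (G : SimpleGraph V) (w : V → ℝ) (f : ℕ → V) (n m : ℕ) (M : Set V)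
    (e₁ e₂ : ℕ) : Prop :=
  ∃ L c n₁ c' n₂, IsBypass G w f n m M e₁ e₂ L c n₁ c' n₂

/-- A bypass that avoids an arc of maximum length. -/
structure IsWidestBypass [Finite V] (G : SimpleGraph V) (w : V → ℝ) (f : ℕ → V) (n m : ℕ)
    (M : Set V) (e₁ e₂ L : ℕ) (c : ℕ → V) (n₁ : ℕ) (c' : ℕ → V) (n₂ : ℕ) : Prop
    extends IsBypass G w f n m M e₁ e₂ L c n₁ c' n₂ where
  widest : ∀ a b, HasBypass G w f n m M a b → b - a ≤ e₂ - e₁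

section MinimalCuts

variable [Finite V] {G : SimpleGraph V} {w : V → ℝ} {q n m : ℕ} {f : ℕ → V} {M D : Set V}

namespace IsCut

lemma pos_and_lt_of_mem (hM : IsCut G w f n m M) {i : ℕ} (hi : i < n) (hiM : f i ∈ M) :
    0 < i ∧ i < m := by
  obtain ⟨t, ht, hti⟩ := hM.inter_subset ⟨hiM, i, rfl⟩
  rwa [← hM.cycle.index_eq (ht.2.trans hM.lt) hi hti]

lemma mem (hw : ∀ v, 0 ≤ w v) (hM : IsCut G w f n m M) {i : ℕ} (hi : 0 < i) (him : i < m) :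
    f i ∈ M := by
  have hm := hM.lt
  obtain ⟨x, hxM, hx⟩ :=
    hM.balanced.inter_nonempty hw hM.hub.connected.preconnected hM.hub.heavy
  exact hM.hub.toIsComponent.subset
    (preconnected_image_of_ordConnected hM.cycle.adj_succ Set.ordConnected_Ioo)
    (hM.cycle.disjoint_image_Ioo (by omega)) ⟨x, hM.inter_subset ⟨hxM, hx⟩, hxM⟩ ⟨i, ⟨hi, him⟩, rfl⟩

lemma le_of_mem_openNbhd (hM : IsCut G w f n m M) {i : ℕ} (hi : i < n) (hD : D ⊆ M)
    (hiD : f i ∈ openNbhd G D) : i ≤ m := by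
  have hm := hM.lt
  rcases hM.hub.openNbhd_subset (openNbhd_mono hD hiD) with h | h | h
  · exact (hM.pos_and_lt_of_mem hi h).2.le
  · exact (hM.cycle.index_eq hi (by omega) h).trans_le (Nat.zero_le _)
  · exact (hM.cycle.index_eq hi hm h).le

lemma component_subset (hw : ∀ v, 0 ≤ w v) (hM : IsCut G w f n m M)
    (hD : IsComponent G (Set.range f) D) {y : ℕ} (hy : 0 < y) (hym : y < m)
    (hyD : f y ∈ openNbhd G D) : D ⊆ M :=
  subset_of_mem_openNbhd hD.connected.preconnected
    (hD.disjoint.mono_right (Set.pair_subset (Set.mem_range_self 0) (Set.mem_range_self m)))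
    hM.hub.openNbhd_subset
    (hM.mem hw hy hym) hyD

end IsCut

/-- The heavy gap of `D` cannot be shorter than `m`. As `D` attaches to `f 0, …, f m` only, the gap
therefore contains the whole rest of the cycle, and its theta is a bypass. -/
lemma IsMinimalCut.exists_hasBypass (hR : IsRobust G w q) (hM : IsMinimalCut G w f n m M)
    (hD : IsComponent G (Set.range f) D) {y : ℕ} (hy : 0 < y) (hym : y < m)
    (hyD : f y ∈ openNbhd G D) {i j : ℕ} (hij : i + 2 ≤ j) (hj : j ≤ m) (hji : j + 2 ≤ i + n)
    (hiD : f i ∈ openNbhd G D) (hjD : f j ∈ openNbhd G D) :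
    ∃ e₁ e₂, HasBypass G w f n m M e₁ e₂ ∧ e₁ ≤ i ∧ j ≤ e₂ := by
  have hm := hM.lt
  have hDM := hM.component_subset hR.nonneg hD hy hym hyD
  obtain ⟨k, hkn, L, h, n', B, H⟩ := hR.exists_isHeavyGap hM.cycle hM.balanced hD
    ⟨⟨i, rfl⟩, hiD⟩ ⟨⟨j, rfl⟩, hjD⟩ (hM.cycle.ne (by omega) (by omega))
    (hM.cycle.not_adj hij hji)
  have hLm : m ≤ L := by
    by_contra! hlt
    exact hM.not_hasHeavyGap L hlt ⟨_, _, _, _, _, _, H⟩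
  have hLn := H.gap.add_two_le
  have hnotMem {s : ℕ} (hks : k < s) (hsk : s < k + L) : f s ∉ openNbhd G D := by
    simpa [Nat.sub_add_cancel hks.le] using H.gap.notMem (s - k) (by omega) (by omega)
  have hkm : k ≤ m := hM.le_of_mem_openNbhd hkn hDM (by simpa using H.gap.left)
  have hwrap : n ≤ k + L := by
    by_contra! hlt
    have := hM.le_of_mem_openNbhd (i := L + k) (by omega) hDM H.gap.right
    exact hnotMem (by omega) (by omega) hyD
  refine ⟨k + L - n, k, ⟨L, h, n', fun s => f (s + k), n, H.theta.symm, by omega, hkm, by omega,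
    fun s hs => ?_, H.arc_subset.trans hDM, ?_, ?_⟩, ?_, ?_⟩
  · rw [H.theta.eq s hs, add_comm]
  · rintro _ ⟨s, hs, rfl⟩
    obtain ⟨hLs, hsn⟩ := hs
    have hmem := hM.mem hR.nonneg (i := s + k - n) (by omega) (by omega)
    rwa [← hM.cycle.periodic, Nat.sub_add_cancel (by omega)] at hmem
  · refine ⟨f (L + 1 + k), ⟨k + L - n + 1, ⟨by omega, by omega⟩, ?_⟩,
      .inr ⟨L + 1, ⟨by omega, by omega⟩, rfl⟩⟩
    rw [← hM.cycle.periodic, show k + L - n + 1 + n = L + 1 + k by omega]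
  · by_contra! hlt
    exact hnotMem (s := i + n) (by omega) (by omega) ((hM.cycle.periodic i).symm ▸ hiD)
  · by_contra! hlt
    exact hnotMem hlt (by omega) hjD

end MinimalCuts

section WidestBypasses

variable [Finite V] {G : SimpleGraph V} {w : V → ℝ} {q n m e₁ e₂ L n₁ n₂ : ℕ} {f c c' : ℕ → V}
  {M B : Set V}

lemma IsCut.exists_isHub_mem (hR : IsRobust G w q) (hM : IsCut G w f n m M) (x y : V) :
    ∃ B, IsHub G w {f 0, f m, x, y} B ∧ ∃ i, 0 < i ∧ i < m ∧ f i ∈ B := by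
  obtain ⟨B, hB⟩ := hR.exists_isHub (S := {f 0, f m, x, y}) <| by
    grw [Set.ncard_insert_le, Set.ncard_insert_le, Set.ncard_insert_le, Set.ncard_singleton]
  have hBM : B ⊆ M := hM.hub.subset hR.nonneg hB.connected.preconnected
    (hB.disjoint.mono_right (Set.pair_subset (by simp) (by simp))) hB.heavy
  obtain ⟨x, hxB, hx⟩ :=
    hM.balanced.inter_nonempty hR.nonneg hB.connected.preconnected hB.heavy
  obtain ⟨i, ⟨hi, him⟩, rfl⟩ := hM.inter_subset ⟨hBM hxB, hx⟩
  exact ⟨B, hB, i, hi, him, hxB⟩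

namespace IsMinimalCut

/-- The arc `f p, …, f r` is shorter than `m`, hence not a cut. -/
lemma exists_crossing (hR : IsRobust G w q) (hM : IsMinimalCut G w f n m M) {p r : ℕ}
    (hrm : r ≤ m) (hlt : r < p + m) (hB : (G.induce B).Preconnected) (hBw : IsHeavy w B)
    (hBends : Disjoint B {f p, f r}) {t : ℕ} (hpt : p < t) (htr : t < r) (htB : f t ∈ B) :
    ∃ D, IsComponent G (Set.range f) D ∧ ∃ i ∈ Set.Ioo p r, f i ∈ openNbhd G D ∧
      ∃ s ∈ Set.Ioo r (p + n), f s ∈ openNbhd G D ∧ (s ≤ m ∨ n ≤ s) := by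
  have hm := hM.lt
  rcases hasCut_or_exists_crossing hR hM.cycle hM.balanced (by omega) hB hBw hBends hpt htr htB with
    hcut | ⟨D, hD, ⟨i, hi, hiD⟩, s, hs, hsD⟩
  · exact absurd hcut (hM.not_hasCut _ (by omega))
  have hDM : D ⊆ M := hM.component_subset hR.nonneg hD (by grind) (hi.2.trans_le hrm) hiD
  refine ⟨D, hD, i, hi, hiD, s, hs, hsD, (lt_or_ge s n).imp_left fun hsn => ?_⟩
  exact hM.le_of_mem_openNbhd hsn hDM hsD

lemma hasBypass_nonempty (hR : IsRobust G w q) (hM : IsMinimalCut G w f n m M) :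
    {e : ℕ × ℕ | HasBypass G w f n m M e.1 e.2}.Nonempty := by
  have hm := hM.lt
  obtain ⟨B, hB, t, ht, htm, htB⟩ := hM.exists_isHub_mem hR (f 1) (f 1)
  have ht1 : t ≠ 1 := fun h => Set.disjoint_left.1 hB.disjoint htB (by simp [h])
  obtain ⟨D, hD, i, ⟨hi, him⟩, hiD, s, ⟨hms, hs⟩, hsD, hsmn⟩ := hM.exists_crossing hR (p := 1)
    le_rfl (by omega) hB.connected.preconnected hB.heavy
    (hB.disjoint.mono_right (Set.pair_subset (by simp) (by simp))) (by omega) htm htB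
  obtain rfl : s = n := by omega
  rw [hM.cycle.periodic.eq] at hsD
  obtain ⟨e₁, e₂, h, -⟩ := hM.exists_hasBypass hR hD (by omega) him hiD (i := 0) (j := i)
    (by omega) him.le (by omega) hsD hiD
  exact ⟨(e₁, e₂), h⟩

lemma exists_isWidestBypass (hR : IsRobust G w q) (hM : IsMinimalCut G w f n m M) :
    ∃ e₁ e₂ L c n₁ c' n₂, IsWidestBypass G w f n m M e₁ e₂ L c n₁ c' n₂ := by
  have hfin : {e : ℕ × ℕ | HasBypass G w f n m M e.1 e.2}.Finite := by
    refine (Set.finite_Iic (m, m)).subset ?_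
    rintro ⟨e₁, e₂⟩ ⟨L, c, n₁, c', n₂, H⟩
    exact ⟨(Nat.le_of_add_right_le H.add_two_le).trans H.le_cut, H.le_cut⟩
  obtain ⟨⟨e₁, e₂⟩, ⟨L, c, n₁, c', n₂, H⟩, hmax⟩ :=
    Set.exists_max_image _ (fun e => e.2 - e.1) hfin (hM.hasBypass_nonempty hR)
  exact ⟨e₁, e₂, L, c, n₁, c', n₂, H, fun a b h => hmax (a, b) h⟩

end IsMinimalCut

namespace IsBypass

lemma symm (H : IsBypass G w f n m M e₁ e₂ L c n₁ c' n₂) :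
    IsBypass G w f n m M e₁ e₂ L c' n₂ c n₁ where
  toIsBalancedTheta := H.toIsBalancedTheta.symm
  add_two_le := H.add_two_le
  le_cut := H.le_cut
  add_eq := H.add_eq
  eq_cycle i hi := (H.eq i hi).trans (H.eq_cycle i hi)
  left_subset := H.right_subset
  right_subset := H.left_subset
  meets := Set.union_comm _ _ ▸ H.meets

lemma apply_zero (H : IsBypass G w f n m M e₁ e₂ L c n₁ c' n₂) : c 0 = f e₂ :=
  H.eq_cycle 0 (Nat.zero_le _)

lemma apply_last (hf : TracesCycle G f n) (H : IsBypass G w f n m M e₁ e₂ L c n₁ c' n₂) :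
    c L = f e₁ := by
  rw [H.eq_cycle L le_rfl, H.add_eq, add_comm, hf.periodic]

lemma farSide_subset (hM : IsCut G w f n m M)
    (H : IsBypass G w f n m M e₁ e₂ L c n₁ c' n₂) : farSide G c c' L ⊆ M := by
  have hm := hM.lt
  have hle := H.le_cut
  have hL := H.add_eq
  have hends : {f 0, f m} ⊆ Set.range c := by
    refine Set.pair_subset ⟨n - e₂, ?_⟩ ⟨m - e₂, ?_⟩
    · rw [H.eq_cycle _ (by omega), Nat.add_sub_of_le (by omega), hM.cycle.periodic.eq]
    · rw [H.eq_cycle _ (by omega), Nat.add_sub_of_le hle]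
  refine hM.hub.toIsComponent.subset H.isComponent_farSide.connected.preconnected
    (H.isComponent_farSide.disjoint.mono_right hends)
    (Set.Nonempty.mono (Set.subset_inter H.image_subset_farSide H.right_subset)
      ⟨c' (L + 1), L + 1, ⟨L.lt_succ_self, H.le_right⟩, rfl⟩)

lemma apply_mem (hw : ∀ v, 0 ≤ w v) (hM : IsCut G w f n m M)
    (H : IsBypass G w f n m M e₁ e₂ L c n₁ c' n₂) {i : ℕ} (hi : n < e₂ + i)
    (him : e₂ + i < m + n₁) : c i ∈ M := by
  have hm := hM.lt
  have hle := H.le_cut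
  have hL := H.add_eq
  have he := H.add_two_le
  rcases le_or_gt i L with hiL | hLi
  · have hmem := hM.mem hw (i := e₂ + i - n) (by omega) (by omega)
    rwa [H.eq_cycle i hiL, ← Nat.sub_add_cancel hi.le, hM.cycle.periodic]
  rcases lt_or_ge i n₁ with hin | hni
  · exact H.left_subset ⟨i, ⟨hLi, hin⟩, rfl⟩
  · have hmem := hM.mem hw (i := e₂ + (i - n₁)) (by omega) (by omega)
    rwa [← H.eq_cycle _ (by omega), ← H.left.periodic, Nat.sub_add_cancel hni] at hmem

/-- The theta of a heavy gap of the far side, seen from the complementary arc of `f`, is again a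
bypass. -/
lemma exists_hasBypass (hR : IsRobust G w q) (hM : IsMinimalCut G w f n m M)
    (H : IsBypass G w f n m M e₁ e₂ L c n₁ c' n₂) {k m' l : ℕ} {h : ℕ → V} (hk : k + m' ≤ L)
    (hlt : m' < L)
    (hgap : IsHeavyGap G w (fun t => c (t + k)) n₁ (farSide G c c' L) m' h l B) :
    ∃ a b, HasBypass G w f n m M a b ∧ e₂ - e₁ < b - a := by
  have hm := hM.lt
  have hle := H.le_cut
  have hL := H.add_eq
  have he := H.add_two_le
  have hLn := H.le_left
  have hfar := H.farSide_subset hM.toIsCut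
  have hmm' : m ≤ m' := by
    by_contra! hlt
    exact hM.not_hasHeavyGap m' hlt ⟨_, _, _, _, _, _, hgap⟩
  have hstart : e₂ + k ≤ m := hM.le_of_mem_openNbhd (by omega) hfar <| by
    simpa [H.eq_cycle k (by omega)] using hgap.gap.left
  have hend : n ≤ e₂ + (m' + k) := by
    by_contra! hlt
    have := hM.le_of_mem_openNbhd hlt hfar <| by
      simpa [H.eq_cycle (m' + k) (by omega)] using hgap.gap.right
    omega
  refine ⟨e₂ + (m' + k) - n, e₂ + k, ⟨m', h, l, fun t => c (t + k), n₁, hgap.theta.symm, by omega,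
    hstart, by omega, fun i hi => ?_, hgap.arc_subset.trans hfar, ?_, ?_⟩, by omega⟩
  · rw [hgap.theta.eq i hi, H.eq_cycle _ (by omega), add_assoc, add_comm k]
  · rintro _ ⟨s, ⟨hms, hsn⟩, rfl⟩
    exact H.apply_mem hR.nonneg hM.toIsCut (by omega) (by omega)
  rcases Nat.eq_zero_or_pos k with rfl | hk0
  · exact ⟨c L, ⟨e₁, ⟨by omega, by omega⟩, (H.apply_last hM.cycle).symm⟩,
      .inr ⟨L, ⟨hlt, by omega⟩, rfl⟩⟩
  · refine ⟨c 0, ⟨e₂, ⟨by omega, by omega⟩, H.apply_zero.symm⟩,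
      .inr ⟨n₁ - k, ⟨by omega, by omega⟩, ?_⟩⟩
    dsimp only
    rw [Nat.sub_add_cancel (by omega), H.left.periodic.eq]

end IsBypass

namespace IsWidestBypass

lemma symm (W : IsWidestBypass G w f n m M e₁ e₂ L c n₁ c' n₂) :
    IsWidestBypass G w f n m M e₁ e₂ L c' n₂ c n₁ :=
  ⟨W.toIsBypass.symm, W.widest⟩

lemma exists_isHeavyGap (hR : IsRobust G w q) (hM : IsMinimalCut G w f n m M)
    (W : IsWidestBypass G w f n m M e₁ e₂ L c n₁ c' n₂) :
    ∃ h l B, IsHeavyGap G w c n₁ (farSide G c c' L) L h l B := by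
  obtain ⟨k, m', h, l, B, hk, H⟩ := W.toIsBalancedTheta.exists_isHeavyGap hR
  rcases lt_or_ge m' L with hlt | hLm
  · obtain ⟨a, b, hab, hwide⟩ := W.exists_hasBypass hR hM hk hlt H
    exact absurd (W.widest a b hab) hwide.not_ge
  obtain rfl : k = 0 := by omega
  obtain rfl : m' = L := by omega
  exact ⟨h, l, B, H⟩

lemma notMem_openNbhd_sides (hR : IsRobust G w q) (hM : IsMinimalCut G w f n m M)
    (W : IsWidestBypass G w f n m M e₁ e₂ L c n₁ c' n₂) {t : ℕ} (ht : 0 < t) (htL : t < L) :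
    c t ∉ openNbhd G (sides G c c' L) := by
  obtain ⟨_, _, _, H⟩ := W.exists_isHeavyGap hR hM
  obtain ⟨_, _, _, H'⟩ := W.symm.exists_isHeavyGap hR hM
  rw [sides, openNbhd_union, Set.mem_union, not_or]
  exact ⟨H.gap.notMem t ht htL, W.eq t htL.le ▸ H'.gap.notMem t ht htL⟩

lemma openNbhd_sides_subset (hR : IsRobust G w q) (hM : IsMinimalCut G w f n m M)
    (W : IsWidestBypass G w f n m M e₁ e₂ L c n₁ c' n₂) :
    openNbhd G (sides G c c' L) ⊆ sides G c c' L ∪ {f e₁, f e₂} := by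
  rw [← W.apply_zero, ← W.apply_last hM.cycle, Set.pair_comm]
  exact W.toIsTheta.openNbhd_sides_subset fun t => W.notMem_openNbhd_sides hR hM

lemma image_Ioo_subset_sides (hR : IsRobust G w q) (hM : IsMinimalCut G w f n m M)
    (W : IsWidestBypass G w f n m M e₁ e₂ L c n₁ c' n₂) :
    f '' Set.Ioo e₁ e₂ ⊆ sides G c c' L := by
  have hm := hM.lt
  have hle := W.le_cut
  refine subset_of_openNbhd_subset
    (preconnected_image_of_ordConnected hM.cycle.adj_succ Set.ordConnected_Ioo)
    (hM.cycle.disjoint_image_Ioo (by omega)) (W.openNbhd_sides_subset hR hM) ?_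
  refine W.meets.mono (Set.inter_subset_inter_right _ (Set.union_subset ?_ ?_))
  · exact W.symm.image_subset_farSide.trans Set.subset_union_right
  · exact W.image_subset_farSide.trans Set.subset_union_left

lemma disjoint_sides (hR : IsRobust G w q) (hM : IsMinimalCut G w f n m M)
    (W : IsWidestBypass G w f n m M e₁ e₂ L c n₁ c' n₂) (hB : (G.induce B).Preconnected)
    (hBw : IsHeavy w B) (hBends : Disjoint B {f e₁, f e₂}) : Disjoint B (sides G c c' L) := by
  obtain ⟨_, _, B', H⟩ := W.exists_isHeavyGap hR hM
  obtain ⟨M', hM'⟩ := hR.exists_isHub_pair (c 0) (c L)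
  obtain ⟨x, hxB', hx⟩ := W.balanced_left.inter_nonempty hR.nonneg H.preconnected H.heavy
  obtain ⟨t, ⟨ht, htL⟩, rfl⟩ := H.inter_subset ⟨hxB', .inl hx⟩
  have htM' : c t ∈ M' := hM'.subset hR.nonneg H.preconnected H.disjoint_ends H.heavy hxB'
  rw [← W.apply_zero, ← W.apply_last hM.cycle, Set.pair_comm] at hBends
  exact (W.toIsTheta.disjoint_sides (fun t => W.notMem_openNbhd_sides hR hM)
    hM'.connected.preconnected hM'.disjoint htL.le htM').mono_left
      (hM'.subset hR.nonneg hB hBends hBw)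

/-- A component attaching to the avoided arc lies in a side of the theta, and a widest bypass
attaches to nothing else. -/
lemma notMem_openNbhd (hR : IsRobust G w q) (hM : IsMinimalCut G w f n m M)
    (W : IsWidestBypass G w f n m M e₁ e₂ L c n₁ c' n₂) {D : Set V}
    (hD : IsComponent G (Set.range f) D) {i : ℕ} (hi : i ∈ Set.Ioo e₁ e₂)
    (hiD : f i ∈ openNbhd G D) {s : ℕ} (hs : e₂ < s) (hsn : s < e₁ + n) :
    f s ∉ openNbhd G D := by
  intro hsD
  have hsub : D ⊆ sides G c c' L := subset_of_mem_openNbhd hD.connected.preconnected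
    (hD.disjoint.mono_right (Set.pair_subset (Set.mem_range_self e₁) (Set.mem_range_self e₂)))
    (W.openNbhd_sides_subset hR hM) (W.image_Ioo_subset_sides hR hM ⟨i, hi, rfl⟩) hiD
  have hL := W.add_eq
  have he := W.add_two_le
  rcases W.openNbhd_sides_subset hR hM (openNbhd_mono hsub hsD) with h | h | h
  · refine W.notMem_sides (t := s - e₂) (by omega) ?_
    rwa [W.eq_cycle _ (by omega), Nat.add_sub_of_le hs.le]
  · exact hM.cycle.ne (by omega) hsn h.symm
  · exact hM.cycle.ne hs (by omega) h.symm

lemma sub_le (hR : IsRobust G w q) (hM : IsMinimalCut G w f n m M)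
    (W : IsWidestBypass G w f n m M e₁ e₂ L c n₁ c' n₂) {D : Set V}
    (hD : IsComponent G (Set.range f) D) {y : ℕ} (hy : 0 < y) (hym : y < m)
    (hyD : f y ∈ openNbhd G D) {i j : ℕ} (hij : i + 2 ≤ j) (hj : j ≤ m) (hji : j + 2 ≤ i + n)
    (hiD : f i ∈ openNbhd G D) (hjD : f j ∈ openNbhd G D) : j - i ≤ e₂ - e₁ := by
  obtain ⟨a, b, hab, hai, hjb⟩ := hM.exists_hasBypass hR hD hy hym hyD hij hj hji hiD hjD
  exact (tsub_le_tsub hjb hai).trans (W.widest a b hab)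

lemma notMem_of_mem_Ioo (hR : IsRobust G w q) (hM : IsMinimalCut G w f n m M)
    (W : IsWidestBypass G w f n m M e₁ e₂ L c n₁ c' n₂) (hB : (G.induce B).Preconnected)
    (hBw : IsHeavy w B) (hBends : Disjoint B {f e₁, f e₂}) {t : ℕ} (ht : e₁ < t) (hte : t < e₂) :
    f t ∉ B := fun htB =>
  Set.disjoint_left.1 (W.disjoint_sides hR hM hB hBw hBends) htB
    (W.image_Ioo_subset_sides hR hM ⟨t, ⟨ht, hte⟩, rfl⟩)

lemma notMem_of_lt (hR : IsRobust G w q) (hM : IsMinimalCut G w f n m M)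
    (W : IsWidestBypass G w f n m M e₁ e₂ L c n₁ c' n₂) (hB : (G.induce B).Preconnected)
    (hBw : IsHeavy w B) (hBends : Disjoint B {f 0, f e₁}) {t : ℕ} (ht : 0 < t) (hte : t < e₁) :
    f t ∉ B := by
  intro htB
  have hm := hM.lt
  have he := W.add_two_le
  have hle := W.le_cut
  obtain ⟨D, hD, j, ⟨hj, hje⟩, hjD, s, ⟨hs, hsn⟩, hsD, hsmn⟩ := hM.exists_crossing hR (p := 0)
    (by omega) (by omega) hB hBw hBends ht hte htB
  have hes : e₂ ≤ s := by
    by_contra! hlt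
    exact W.notMem_openNbhd hR hM hD ⟨hs, hlt⟩ hsD (s := j + n) (by omega) (by omega)
      ((hM.cycle.periodic j).symm ▸ hjD)
  have := W.sub_le hR hM hD hj (by omega) hjD (by omega) (by omega) (by omega) hjD hsD
  omega

lemma notMem_of_gt (hR : IsRobust G w q) (hM : IsMinimalCut G w f n m M)
    (W : IsWidestBypass G w f n m M e₁ e₂ L c n₁ c' n₂) (hB : (G.induce B).Preconnected)
    (hBw : IsHeavy w B) (hBends : Disjoint B {f e₂, f m}) {t : ℕ} (het : e₂ < t) (htm : t < m) :
    f t ∉ B := by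
  intro htB
  have hm := hM.lt
  have he := W.add_two_le
  obtain ⟨D, hD, j, ⟨hj, hjm⟩, hjD, s, ⟨hs, hsn⟩, hsD, hsmn⟩ := hM.exists_crossing hR
    le_rfl (by omega) hB hBw hBends het htm htB
  obtain ⟨s, rfl⟩ := Nat.exists_eq_add_of_le' (show n ≤ s by omega)
  rw [hM.cycle.periodic] at hsD
  have hse : s ≤ e₁ := by
    by_contra! hlt
    exact W.notMem_openNbhd hR hM hD ⟨hlt, by omega⟩ hsD hj (by omega) hjD
  have := W.sub_le hR hM hD (by omega) hjm hjD (by omega) hjm.le (by omega) hsD hjD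
  omega

end IsWidestBypass

/-- The hub of the ends of a minimal cut and of a widest bypass would have to meet one of the three
arcs into which the ends of the bypass divide the arc of the cut. -/
lemma IsRobust.not_isMinimalCut (hR : IsRobust G w q) : ¬ IsMinimalCut G w f n m M := by
  intro hM
  obtain ⟨e₁, e₂, L, c, n₁, c', n₂, W⟩ := hM.exists_isWidestBypass hR
  obtain ⟨B, hB, t, ht, htm, htB⟩ := hM.exists_isHub_mem hR (f e₁) (f e₂)
  have hconn := hB.connected.preconnected
  have hends (x y : V) (hx : x ∈ ({f 0, f m, f e₁, f e₂} : Set V) := by simp)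
      (hy : y ∈ ({f 0, f m, f e₁, f e₂} : Set V) := by simp) : Disjoint B {x, y} :=
    hB.disjoint.mono_right (Set.pair_subset hx hy)
  rcases lt_trichotomy t e₁ with hte | rfl | het
  · exact W.notMem_of_lt hR hM hconn hB.heavy (hends _ _) ht hte htB
  · exact Set.disjoint_left.1 hB.disjoint htB (by simp)
  rcases lt_trichotomy t e₂ with hte | rfl | het'
  · exact W.notMem_of_mem_Ioo hR hM hconn hB.heavy (hends _ _) het hte htB
  · exact Set.disjoint_left.1 hB.disjoint htB (by simp)
  · exact W.notMem_of_gt hR hM hconn hB.heavy (hends _ _) het' htm htB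

/-- A shortest cut or heavy gap is a minimal cut, since a shortest heavy gap gives a cut of the same
length. -/
lemma IsRobust.not_hasCut_and_not_hasHeavyGap (hR : IsRobust G w q) (m : ℕ) :
    ¬ HasCut G w m ∧ ¬ HasHeavyGap G w m := by
  induction m using Nat.strong_induction_on with
  | _ m ih =>
    have hcut : ¬ HasCut G w m := fun ⟨f, n, M, hM⟩ =>
      hR.not_isMinimalCut ⟨hM, fun m' h => (ih m' h).1, fun m' h => (ih m' h).2⟩
    exact ⟨hcut, fun hm => hcut (hasCut_of_hasHeavyGap hR hm fun m' h => (ih m' h).2)⟩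

theorem exists_isBalancedSep_ncard_le_sq (hw : ∀ v, 0 ≤ w v) (hq : 2 ≤ q)
    (hG : FewAttachments G q) (hf : TracesCycle G f n)
    (hbal : IsBalancedSep G w (Set.range f)) : ∃ S, IsBalancedSep G w S ∧ S.ncard ≤ q ^ 2 := by
  by_contra! hno
  have hR : IsRobust G w q :=
    ⟨hw, hq, hG, fun S hS hbal => (hno S hbal).not_ge hS⟩
  have hn := hf.three_le
  obtain ⟨B, hB⟩ := hR.exists_isHub_pair (f 0) (f (n - 1))
  exact (hR.not_hasCut_and_not_hasHeavyGap _).1 <|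
    hasCut_of_isHub hf hbal (p := 0) (Nat.zero_le _) (by omega) hB (by omega)

end WidestBypasses

/-- weighted main theorem for `W_ℓ`-induced-minor-free graphs. -/
theorem main_weighted [Finite V] (G : SimpleGraph V) (ℓ : ℕ) (hℓ : 3 ≤ ℓ)
    (hfree : ¬ IsInducedMinor (wheel ℓ) G)
    (w : V → ℝ) (hw0 : ∀ v, 0 ≤ w v) :
    ∃ S : Set V, IsBalancedSep G w S ∧
      ((∃ D : Set V, D.ncard ≤ ℓ ∧ S ⊆ closedNbhd G D) ∨
        S.ncard ≤ (ℓ - 1) ^ 2) := by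
  have hG := fewAttachments_of_not_isInducedMinor_wheel (by omega) hfree
  rcases exists_isBalancedSep_closedNbhd_or_cycle hw0 (by omega) hG with
    ⟨D, hD, hbal⟩ | ⟨f, n, hf, hbal⟩
  · exact ⟨closedNbhd G D, hbal, .inl ⟨D, by omega, subset_rfl⟩⟩
  · obtain ⟨S, hS, hcard⟩ := exists_isBalancedSep_ncard_le_sq hw0 (by omega) hG hf hbal
    exact ⟨S, hS, .inr hcard⟩
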